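/- arXiv:2110.08804 — 3 statements merged into one kernel-verified Lean document; each statement's English description precedes it below -/
import Mathlib

section
/- Let π: O(G) → O(H) be a surjective Hopf algebra morphism with O(G) cosemisimple such that A := O(G/H) = O(H\G) is a Hopf subalgebra of O(G), and set O(K) := O(G)/O(G)A⁻ where A⁻ = A ∩ ker ε (a Hopf algebra quotient, cosemisimple, through which π factors as O(G) → O(K) → O(H)). Then every simple right O(K)-comodule whose restriction to O(H) contains a nonzero invariant vector is trivial; equivalently O(K/H) = O(H\K) = k. -/
/- Common infrastructure: right comodules over coalgebras, simplicity,
cosemisimplicity, subcoalgebras, adjoint coactions, normality, etc. -/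

open TensorProduct

universe u

namespace QG

variable (k : Type u) [Field k]

section Coalg

variable (C : Type u) [AddCommGroup C] [Module k C] [Coalgebra k C]

/-- `ρ : V →ₗ[k] V ⊗[k] C` is a (coassociative, counital) right coaction. -/
structure IsComod {V : Type u} [AddCommGroup V] [Module k V]
    (ρ : V →ₗ[k] V ⊗[k] C) : Prop where
  coassoc : ∀ v : V, ρ.rTensor C (ρ v) =
    (TensorProduct.assoc k V C C).symm.toLinearMap
      ((Coalgebra.comul (R := k) (A := C)).lTensor V (ρ v))
  counit : ∀ v : V, (TensorProduct.rid k V)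
      ((Coalgebra.counit (R := k) (A := C)).lTensor V (ρ v)) = v

/-- A submodule `U ≤ V` is a subcomodule if the coaction restricts to it,
i.e. maps `U` into the image of `U ⊗ C` in `V ⊗ C`. -/
def IsSubcomod {V : Type u} [AddCommGroup V] [Module k V]
    (ρ : V →ₗ[k] V ⊗[k] C) (U : Submodule k V) : Prop :=
  ∀ u ∈ U, ρ u ∈ LinearMap.range ((U.subtype).rTensor C)

/-- A simple subcomodule: a nonzero subcomodule with no nonzero proper
subcomodules below it. -/
def IsSimpleSubcomod {V : Type u} [AddCommGroup V] [Module k V]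
    (ρ : V →ₗ[k] V ⊗[k] C) (U : Submodule k V) : Prop :=
  IsSubcomod k C ρ U ∧ U ≠ ⊥ ∧
    ∀ U' : Submodule k V, U' ≤ U → IsSubcomod k C ρ U' → U' = ⊥ ∨ U' = U

/-- A comodule is simple if it is simple as a subcomodule of itself. -/
def IsSimpleComod {V : Type u} [AddCommGroup V] [Module k V]
    (ρ : V →ₗ[k] V ⊗[k] C) : Prop :=
  IsSimpleSubcomod k C ρ ⊤

/-- Morphisms of right `C`-comodules. -/
def IsComodHom {V W : Type u} [AddCommGroup V] [Module k V]
    [AddCommGroup W] [Module k W]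
    (ρV : V →ₗ[k] V ⊗[k] C) (ρW : W →ₗ[k] W ⊗[k] C) (f : V →ₗ[k] W) : Prop :=
  ρW ∘ₗ f = (f.rTensor C) ∘ₗ ρV

/-- `C` is cosemisimple: every right `C`-comodule is an (internal) direct sum
of simple subcomodules. -/
def IsCosemisimple : Prop :=
  ∀ (V : Type u) [AddCommGroup V] [Module k V]
    (ρ : V →ₗ[k] V ⊗[k] C), IsComod k C ρ →
    ∃ (ι : Type u) (U : ι → Submodule k V),
      (∀ i, IsSimpleSubcomod k C ρ (U i)) ∧
      iSupIndep U ∧ (⨆ i, U i) = ⊤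

/-- Subcoalgebras of `C`, as submodules. -/
def IsSubcoalgebra (D : Submodule k C) : Prop :=
  ∀ x ∈ D, Coalgebra.comul (R := k) x ∈
    LinearMap.range (TensorProduct.map D.subtype D.subtype)

/-- Simple subcoalgebras: nonzero ones with no nonzero proper subcoalgebras. -/
def IsSimpleSubcoalgebra (D : Submodule k C) : Prop :=
  IsSubcoalgebra k C D ∧ D ≠ ⊥ ∧
    ∀ D' : Submodule k C, D' ≤ D → IsSubcoalgebra k C D' → D' = ⊥ ∨ D' = D

/-- The coefficient space of a comodule: the smallest submodule `D ≤ C` such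
that the coaction factors through `V ⊗ D`.  For a simple comodule this is its
coefficient coalgebra. -/
def coeffSpace {V : Type u} [AddCommGroup V] [Module k V]
    (ρ : V →ₗ[k] V ⊗[k] C) : Submodule k C :=
  sInf {D : Submodule k C | ∀ v : V, ρ v ∈ LinearMap.range ((D.subtype).lTensor V)}

/-- Corestriction of a coaction along a linear map of coalgebras `π : C → D`. -/
noncomputable def cores {D : Type u} [AddCommGroup D] [Module k D]
    {V : Type u} [AddCommGroup V] [Module k V]
    (π : C →ₗ[k] D) (ρ : V →ₗ[k] V ⊗[k] C) : V →ₗ[k] V ⊗[k] D :=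
  (π.lTensor V) ∘ₗ ρ

end Coalg

section Bialg

variable (H : Type u) [Ring H] [Bialgebra k H]

/-- An invariant vector for a coaction of a bialgebra. -/
def IsInvariant {V : Type u} [AddCommGroup V] [Module k V]
    (ρ : V →ₗ[k] V ⊗[k] H) (v : V) : Prop :=
  ρ v = v ⊗ₜ[k] (1 : H)

/-- The tensor product coaction on `V ⊗ W` for a bialgebra `H`:
`v ⊗ w ↦ (v₀ ⊗ w₀) ⊗ v₁w₁`. -/
noncomputable def tensorCoact {V W : Type u}
    [AddCommGroup V] [Module k V] [AddCommGroup W] [Module k W]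
    (ρV : V →ₗ[k] V ⊗[k] H) (ρW : W →ₗ[k] W ⊗[k] H) :
    (V ⊗[k] W) →ₗ[k] (V ⊗[k] W) ⊗[k] H :=
  ((LinearMap.mul' k H).lTensor (V ⊗[k] W)) ∘ₗ
    (TensorProduct.tensorTensorTensorComm k V H W H).toLinearMap ∘ₗ
    (TensorProduct.map ρV ρW)

/-- `O(G/H)`: the right coinvariants `{x | (id ⊗ π)Δ(x) = x ⊗ 1}` of a
quotient map `π`. -/
noncomputable def quotientSpaceLeft {B : Type u} [AddCommGroup B] [Module k B] [One B]
    (π : H →ₗ[k] B) : Submodule k H :=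
  LinearMap.ker ((π.lTensor H) ∘ₗ (Coalgebra.comul (R := k) (A := H)) -
    (TensorProduct.mk k H B).flip 1)

/-- `O(H\G)`: the left coinvariants `{x | (π ⊗ id)Δ(x) = 1 ⊗ x}`. -/
noncomputable def quotientSpaceRight {B : Type u} [AddCommGroup B] [Module k B] [One B]
    (π : H →ₗ[k] B) : Submodule k H :=
  LinearMap.ker ((π.rTensor H) ∘ₗ (Coalgebra.comul (R := k) (A := H)) -
    (TensorProduct.mk k B H) 1)

end Bialg

section Hopf

variable (H : Type u) [Ring H] [HopfAlgebra k H]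

/-- Iterated comultiplication `x ↦ x₁ ⊗ (x₂ ⊗ x₃)`. -/
noncomputable def comul2 : H →ₗ[k] H ⊗[k] (H ⊗[k] H) :=
  ((Coalgebra.comul (R := k) (A := H)).lTensor H) ∘ₗ (Coalgebra.comul (R := k) (A := H))

/-- The right adjoint coaction `x ↦ x₂ ⊗ S(x₁)x₃`. -/
noncomputable def adR : H →ₗ[k] H ⊗[k] H :=
  ((LinearMap.mul' k H).lTensor H) ∘ₗ
    (TensorProduct.assoc k H H H).toLinearMap ∘ₗ
    (((TensorProduct.comm k H H).toLinearMap).rTensor H) ∘ₗ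
    (TensorProduct.assoc k H H H).symm.toLinearMap ∘ₗ
    ((HopfAlgebra.antipode (R := k) (A := H)).rTensor (H ⊗[k] H)) ∘ₗ
    comul2 k H

/-- The left adjoint coaction `x ↦ x₁S(x₃) ⊗ x₂` (a left coaction, with the
coacting tensorand on the left). -/
noncomputable def adL : H →ₗ[k] H ⊗[k] H :=
  ((LinearMap.mul' k H).rTensor H) ∘ₗ
    (TensorProduct.assoc k H H H).symm.toLinearMap ∘ₗ
    (((TensorProduct.comm k H H).toLinearMap).lTensor H) ∘ₗ
    (((HopfAlgebra.antipode (R := k) (A := H)).lTensor H).lTensor H) ∘ₗ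
    comul2 k H

variable {B : Type u} [AddCommGroup B] [Module k B]

/-- `π : O(G) → O(H)` is right-normal: it is a morphism of right
`O(G)`-comodules for the right adjoint coaction, i.e. the right adjoint
coaction descends along `π`. -/
def IsRightNormal (π : H →ₗ[k] B) : Prop :=
  ∃ ρ : B →ₗ[k] B ⊗[k] H, ρ ∘ₗ π = (π.rTensor H) ∘ₗ adR k H

/-- `π : O(G) → O(H)` is left-normal: the left adjoint coaction descends
along `π`. -/
def IsLeftNormal (π : H →ₗ[k] B) : Prop :=
  ∃ lam : B →ₗ[k] H ⊗[k] B, lam ∘ₗ π = (π.lTensor H) ∘ₗ adL k H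

end Hopf

end QG

namespace QG

variable (k : Type u) [Field k]

section Coalg2

variable (C : Type u) [AddCommGroup C] [Module k C] [Coalgebra k C]

/-- A bundled simple right `C`-comodule. -/
structure SimpleComodule where
  V : Type u
  [addCommGroup : AddCommGroup V]
  [module : Module k V]
  ρ : V →ₗ[k] V ⊗[k] C
  isComod : IsComod k C ρ
  isSimple : IsSimpleComod k C ρ

attribute [instance] SimpleComodule.addCommGroup SimpleComodule.module

/-- A simple comodule `(T, ρT)` is a constituent of a comodule `(V, ρV)`
(over a cosemisimple coalgebra) iff there is a nonzero comodule map `T → V`. -/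
def IsConstituent {T V : Type u} [AddCommGroup T] [Module k T]
    [AddCommGroup V] [Module k V]
    (ρT : T →ₗ[k] T ⊗[k] C) (ρV : V →ₗ[k] V ⊗[k] C) : Prop :=
  ∃ f : T →ₗ[k] V, f ≠ 0 ∧ IsComodHom k C ρT ρV f

/-- Isomorphism of (simple) comodules. -/
def comodIsoRel (X Y : SimpleComodule k C) : Prop :=
  ∃ e : X.V ≃ₗ[k] Y.V, IsComodHom k C X.ρ Y.ρ e.toLinearMap

/-- The set `Ĉ` of isomorphism classes of simple right `C`-comodules. -/
def SimpleComodQuot := Quot (comodIsoRel k C)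

/-- The isomorphism class of a simple comodule. -/
def SimpleComodule.cls (X : SimpleComodule k C) : SimpleComodQuot k C :=
  Quot.mk _ X

/-- Group-like elements of a coalgebra; these correspond to the
one-dimensional comodules, i.e. to characters. -/
def IsGroupLike (a : C) : Prop :=
  Coalgebra.counit (R := k) (A := C) a = (1 : k) ∧
    Coalgebra.comul (R := k) (A := C) a = a ⊗ₜ[k] a

/-- A linear map `φ : C → Z` out of a coalgebra is central if
`φ(x₁) ⊗ x₂ = φ(x₂) ⊗ x₁`. -/
def IsCentralMap {Z : Type u} [AddCommGroup Z] [Module k Z] (φ : C →ₗ[k] Z) : Prop :=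
  (φ.rTensor C) ∘ₗ (Coalgebra.comul (R := k) (A := C)) =
    (φ.rTensor C) ∘ₗ (TensorProduct.comm k C C).toLinearMap ∘ₗ
      (Coalgebra.comul (R := k) (A := C))

/-- The simple comodule `X` has "central character" `g` with respect to the
quotient map `γ : C → Z`: corestricted along `γ`, the coaction on `X` is a sum
of copies of the character `g`. -/
def HasCentralChar {Z : Type u} [AddCommGroup Z] [Module k Z]
    (γ : C →ₗ[k] Z) (X : SimpleComodule k C) (g : Z) : Prop :=
  ∀ v : X.V, cores k C γ X.ρ v = v ⊗ₜ[k] g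

end Coalg2

/-- The k-span of the set of products `g * a`, `a ∈ Am`; for `Am` a submodule
this is the left ideal generated by `Am`. -/
def leftIdealGen {G : Type u} [Ring G] [Module k G] (Am : Submodule k G) :
    Submodule k G :=
  Submodule.span k {x : G | ∃ g : G, ∃ a ∈ Am, x = g * a}

end QG

namespace QG

/-- A Hopf subalgebra, as a submodule. -/
def IsHopfSubalgebra (k : Type u) [Field k] (G : Type u) [Ring G] [HopfAlgebra k G]
    (D : Submodule k G) : Prop :=
  (1 : G) ∈ D ∧ (∀ x ∈ D, ∀ y ∈ D, x * y ∈ D) ∧ IsSubcoalgebra k G D ∧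
    D.map (HopfAlgebra.antipode (R := k) (A := G)) ≤ D

end QG

namespace QGaux

open QG Coalgebra

section slices
variable {k : Type u} [Field k]

theorem mem_range_rTensor {V W : Type u} [AddCommGroup V] [Module k V]
    [AddCommGroup W] [Module k W] (U : Submodule k V) (t : V ⊗[k] W)
    (h : ∀ f : W →ₗ[k] k, TensorProduct.rid k V (f.lTensor V t) ∈ U) :
    t ∈ LinearMap.range (U.subtype.rTensor W) := by
  classical
  let b := Module.Basis.ofVectorSpace k W
  have e := (TensorProduct.equivFinsuppOfBasisRight (M := V) b).symm_apply_apply t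
  rw [TensorProduct.equivFinsuppOfBasisRight_symm_apply] at e
  rw [← e]
  refine Submodule.sum_mem _ fun i _ => ?_
  refine ⟨(⟨TensorProduct.equivFinsuppOfBasisRight b t i, ?_⟩ : U) ⊗ₜ b i, ?_⟩
  · rw [TensorProduct.equivFinsuppOfBasisRight_apply]; exact h _
  · simp

theorem mem_range_lTensor {V W : Type u} [AddCommGroup V] [Module k V]
    [AddCommGroup W] [Module k W] (U : Submodule k W) (t : V ⊗[k] W)
    (h : ∀ f : V →ₗ[k] k, TensorProduct.lid k W (f.rTensor W t) ∈ U) :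
    t ∈ LinearMap.range (U.subtype.lTensor V) := by
  classical
  let b := Module.Basis.ofVectorSpace k V
  have e := (TensorProduct.equivFinsuppOfBasisLeft (N := W) b).symm_apply_apply t
  rw [TensorProduct.equivFinsuppOfBasisLeft_symm_apply] at e
  rw [← e]
  refine Submodule.sum_mem _ fun i _ => ?_
  refine ⟨b i ⊗ₜ (⟨TensorProduct.equivFinsuppOfBasisLeft b t i, ?_⟩ : U), ?_⟩
  · rw [TensorProduct.equivFinsuppOfBasisLeft_apply]; exact h _
  · simp

theorem slice_r_mem {V W : Type u} [AddCommGroup V] [Module k V]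
    [AddCommGroup W] [Module k W] (U : Submodule k V) (t : V ⊗[k] W)
    (h : t ∈ LinearMap.range (U.subtype.rTensor W)) (f : W →ₗ[k] k) :
    TensorProduct.rid k V (f.lTensor V t) ∈ U := by
  obtain ⟨s, rfl⟩ := h
  induction s with
  | zero => simp
  | tmul x y => simpa using U.smul_mem _ x.2
  | add x y hx hy => simpa using U.add_mem hx hy

end slices

section coalg
variable {k : Type u} [Field k] {C : Type u} [AddCommGroup C] [Module k C] [Coalgebra k C]

/-- `x ↦ f(x₁) x₂` -/
noncomputable def rop (f : C →ₗ[k] k) : C →ₗ[k] C :=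
  (TensorProduct.lid k C).toLinearMap ∘ₗ f.rTensor C ∘ₗ comul

/-- `x ↦ x₁ f(x₂)` -/
noncomputable def lop (f : C →ₗ[k] k) : C →ₗ[k] C :=
  (TensorProduct.rid k C).toLinearMap ∘ₗ f.lTensor C ∘ₗ comul

theorem rop_def (f : C →ₗ[k] k) (x : C) :
    rop f x = TensorProduct.lid k C (f.rTensor C (comul x)) := rfl

theorem lop_def (f : C →ₗ[k] k) (x : C) :
    lop f x = TensorProduct.rid k C (f.lTensor C (comul x)) := rfl

theorem comul_rop (f : C →ₗ[k] k) (x : C) :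
    comul (R := k) (rop f x) = (rop f).rTensor C (comul x) := by
  have h1 : ∀ t : C ⊗[k] C, comul (R := k) (TensorProduct.lid k C (f.rTensor C t)) =
      TensorProduct.lid k (C ⊗[k] C) (f.rTensor (C ⊗[k] C) (comul.lTensor C t)) := by
    intro t
    induction t with
    | zero => simp
    | tmul x y => simp
    | add x y hx hy => simp only [map_add, hx, hy]
  have h3 : ∀ (s : C ⊗[k] C) (b : C), (TensorProduct.lid k C (f.rTensor C s)) ⊗ₜ[k] b =
      TensorProduct.lid k (C ⊗[k] C) (f.rTensor (C ⊗[k] C)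
        (TensorProduct.assoc k C C C (s ⊗ₜ b))) := by
    intro s b
    induction s with
    | zero => simp
    | tmul x y => simp [TensorProduct.smul_tmul']
    | add x y hx hy => simp only [map_add, TensorProduct.add_tmul, hx, hy]
  have h2 : ∀ t : C ⊗[k] C, (rop f).rTensor C t =
      TensorProduct.lid k (C ⊗[k] C) (f.rTensor (C ⊗[k] C)
        (TensorProduct.assoc k C C C (comul.rTensor C t))) := by
    intro t
    induction t with
    | zero => simp
    | tmul x y => simp only [LinearMap.rTensor_tmul, rop_def, h3]
    | add x y hx hy => simp only [map_add, hx, hy]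
  rw [h2, coassoc_apply, rop_def, h1]

theorem comul_lop (f : C →ₗ[k] k) (x : C) :
    comul (R := k) (lop f x) = (lop f).lTensor C (comul x) := by
  have h1 : ∀ t : C ⊗[k] C, comul (R := k) (TensorProduct.rid k C (f.lTensor C t)) =
      TensorProduct.rid k (C ⊗[k] C) (f.lTensor (C ⊗[k] C) (comul.rTensor C t)) := by
    intro t
    induction t with
    | zero => simp
    | tmul x y => simp
    | add x y hx hy => simp only [map_add, hx, hy]
  have h3 : ∀ (s : C ⊗[k] C) (b : C), b ⊗ₜ[k] (TensorProduct.rid k C (f.lTensor C s)) =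
      TensorProduct.rid k (C ⊗[k] C) (f.lTensor (C ⊗[k] C)
        ((TensorProduct.assoc k C C C).symm (b ⊗ₜ s))) := by
    intro s b
    induction s with
    | zero => simp
    | tmul x y => simp
    | add x y hx hy => simp only [map_add, TensorProduct.tmul_add, hx, hy]
  have h2 : ∀ t : C ⊗[k] C, (lop f).lTensor C t =
      TensorProduct.rid k (C ⊗[k] C) (f.lTensor (C ⊗[k] C)
        ((TensorProduct.assoc k C C C).symm (comul.lTensor C t))) := by
    intro t
    induction t with
    | zero => simp
    | tmul x y => simp only [LinearMap.lTensor_tmul, lop_def, h3]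
    | add x y hx hy => simp only [map_add, hx, hy]
  rw [h2, coassoc_symm_apply, lop_def, h1]

theorem apply_rop (f g : C →ₗ[k] k) (x : C) : g (rop f x) = f (lop g x) := by
  rw [rop_def, lop_def]
  generalize comul (R := k) x = t
  induction t with
  | zero => simp
  | tmul x y => simp [mul_comm]
  | add x y hx hy => simp only [map_add, hx, hy]

theorem lop_counit (x : C) : lop (counit (R := k)) x = x := by simp [lop_def]
theorem rop_counit (x : C) : rop (counit (R := k)) x = x := by simp [rop_def]

theorem counit_rop (f : C →ₗ[k] k) (x : C) : counit (R := k) (rop f x) = f x := by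
  rw [apply_rop, lop_counit]
theorem counit_lop (f : C →ₗ[k] k) (x : C) : counit (R := k) (lop f x) = f x := by
  rw [← apply_rop, rop_counit]

theorem lop_rop (f g : C →ₗ[k] k) (x : C) : lop f (rop g x) = rop g (lop f x) := by
  rw [rop_def g (lop f x), comul_lop, rop_def]
  generalize comul (R := k) x = t
  induction t with
  | zero => simp
  | tmul x y => simp
  | add x y hx hy => simp only [map_add, hx, hy]

theorem dual_ext {x y : C} (h : ∀ f : C →ₗ[k] k, f x = f y) : x = y := by
  rw [← sub_eq_zero, ← Module.forall_dual_apply_eq_zero_iff k]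
  intro f; rw [map_sub, h f, sub_self]

theorem isSubcomod_iff (U : Submodule k C) :
    IsSubcomod k C (comul (R := k) (A := C)) U ↔ ∀ f : C →ₗ[k] k, ∀ u ∈ U, lop f u ∈ U :=
  ⟨fun h f u hu => slice_r_mem U _ (h u hu) f, fun h u hu => mem_range_rTensor U _ fun f => h f u hu⟩

variable (k C) in
/-- the algebra generated by the operators `lop f`. -/
noncomputable abbrev Ralg : Subalgebra k (Module.End k C) :=
  Algebra.adjoin k (Set.range (lop (k := k) (C := C)))

theorem Ralg_induct {P : Module.End k C → Prop} (hl : ∀ f, P (lop f)) (hs : ∀ c : k, P (algebraMap k _ c))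
    (ha : ∀ a b, P a → P b → P (a + b)) (hm : ∀ a b, P a → P b → P (a * b))
    (r : Ralg k C) : P (r : Module.End k C) := by
  refine Algebra.adjoin_induction (p := fun x _ => P x) ?_ hs (fun a b _ _ => ha a b)
    (fun a b _ _ => hm a b) r.2
  rintro _ ⟨f, rfl⟩; exact hl f

/-- A stable subspace as an `Ralg`-submodule. -/
noncomputable def toSub (U : Submodule k C) (h : ∀ f : C →ₗ[k] k, ∀ u ∈ U, lop f u ∈ U) : Submodule (Ralg k C) C where
  __ := U.toAddSubmonoid
  smul_mem' := by
    intro r x hx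
    exact Ralg_induct (P := fun r => ∀ x ∈ U, r x ∈ U) h (fun c x hx => U.smul_mem c hx)
      (fun a b h1 h2 x hx => U.add_mem (h1 x hx) (h2 x hx)) (fun a b h1 h2 x hx => h1 _ (h2 x hx)) r x hx

theorem mem_toSub (U : Submodule k C) (h) (x : C) : x ∈ toSub U h ↔ x ∈ U := Iff.rfl

theorem lop_mem (N : Submodule (Ralg k C) C) (f : C →ₗ[k] k) {x : C} (hx : x ∈ N) : lop f x ∈ N :=
  N.smul_mem (⟨lop f, Algebra.subset_adjoin ⟨f, rfl⟩⟩ : Ralg k C) hx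

theorem lin_lop (e : C →ₗ[Ralg k C] C) (f : C →ₗ[k] k) (x : C) : e (lop f x) = lop f (e x) :=
  e.map_smul (⟨lop f, Algebra.subset_adjoin ⟨f, rfl⟩⟩ : Ralg k C) x

theorem lin_smul (e : C →ₗ[Ralg k C] C) (c : k) (x : C) : e (c • x) = c • e x :=
  e.map_smul (algebraMap k (Ralg k C) c) x

/-- An `Ralg`-linear map as `k`-linear map. -/
noncomputable def toLin (e : C →ₗ[Ralg k C] C) : C →ₗ[k] C where
  toFun := e
  map_add' := e.map_add
  map_smul' := lin_smul e

/-- `rop f` as `Ralg`-linear map. -/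
noncomputable def ropR (g : C →ₗ[k] k) : C →ₗ[Ralg k C] C where
  toFun := rop g
  map_add' := (rop g).map_add
  map_smul' := by
    intro r x
    exact Ralg_induct (P := fun r => ∀ x, rop g (r x) = r (rop g x)) (fun f x => (lop_rop f g x).symm)
      (fun c x => (rop g).map_smul c x) (fun a b h1 h2 x => by simp [h1, h2])
      (fun a b h1 h2 x => by simp [h1, h2]) r x

theorem lin_eq_rop (e : C →ₗ[Ralg k C] C) (x : C) : e x = rop (counit ∘ₗ toLin e) x := by
  refine dual_ext (k := k) fun f => ?_
  rw [apply_rop, ← counit_lop f (e x), ← lin_lop]; rfl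

theorem rop_mem_of_subcoalg {A : Submodule k C} (hA : IsSubcoalgebra k C A) (f : C →ₗ[k] k) {x : C} (hx : x ∈ A) :
    rop f x ∈ A := by
  obtain ⟨t, ht⟩ := hA x hx
  rw [rop_def, ← ht]
  clear ht
  induction t with
  | zero => simp
  | tmul x y => simpa using A.smul_mem _ y.2
  | add x y hx hy => simpa using A.add_mem hx hy

theorem lop_mem_of_subcoalg {A : Submodule k C} (hA : IsSubcoalgebra k C A) (f : C →ₗ[k] k) {x : C} (hx : x ∈ A) :
    lop f x ∈ A := by
  obtain ⟨t, ht⟩ := hA x hx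
  rw [lop_def, ← ht]
  clear ht
  induction t with
  | zero => simp
  | tmul x y => simpa using A.smul_mem _ x.2
  | add x y hx hy => simpa using A.add_mem hx hy

theorem semisimple (h : IsCosemisimple k C) : IsSemisimpleModule (Ralg k C) C := by
  obtain ⟨ι, U, hU, -, htop⟩ := h C comul ⟨fun v => (coassoc_symm_apply v).symm, fun v => by simp⟩
  have hst : ∀ i, ∀ f : C →ₗ[k] k, ∀ u ∈ U i, lop f u ∈ U i := fun i => (isSubcomod_iff _).1 (hU i).1
  have hsimp : ∀ i, IsSimpleModule (Ralg k C) (toSub (U i) (hst i)) := by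
    intro i
    rw [isSimpleModule_iff_isAtom]
    refine ⟨fun hb => (hU i).2.1 ?_, fun N hN => ?_⟩
    · rw [eq_bot_iff]; intro x hx
      have : x ∈ toSub (U i) (hst i) := hx
      rw [hb] at this; exact this
    · let N' : Submodule k C := N.restrictScalars k
      have h1 : N' ≤ U i := fun x hx => hN.le hx
      rcases (hU i).2.2 N' h1 ((isSubcomod_iff _).2 fun f u hu => lop_mem N f hu) with h2 | h2
      · rw [eq_bot_iff]; intro x hx
        have : x ∈ N' := hx
        rw [h2] at this; exact this
      · exfalso; apply hN.not_ge
        intro x hx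
        have : x ∈ U i := hx
        rw [← h2] at this; exact this
  apply IsSemisimpleModule.of_sSup_simples_eq_top
  rw [eq_top_iff]
  set N := sSup {m : Submodule (Ralg k C) C | IsSimpleModule (Ralg k C) m}
  have : (⊤ : Submodule k C) ≤ N.restrictScalars k := by
    rw [← htop]
    refine iSup_le fun i x hx => ?_
    exact (le_sSup (hsimp i) : toSub (U i) (hst i) ≤ N) hx
  exact fun x _ => this (Submodule.mem_top (x := x))

theorem exists_phi (h : IsCosemisimple k C) (A : Submodule k C) (hA : IsSubcoalgebra k C A) :
    ∃ φ : C →ₗ[k] k, (∀ x, lop φ x = rop φ x) ∧ (∀ x, rop φ x ∈ A) ∧ ∀ a ∈ A, φ a = counit (R := k) a := by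
  have := semisimple h
  let M := toSub A (fun f u hu => lop_mem_of_subcoalg hA f hu)
  have hM : M.IsFullyInvariant := by
    intro e x hx
    change e x ∈ A
    rw [lin_eq_rop]; exact rop_mem_of_subcoalg hA _ hx
  let o := OrderIso.setIsotypicComponents (R := Ralg k C) (M := C)
  obtain ⟨N, hN⟩ : ∃ N : fullyInvariantSubmodule (Ralg k C) C, IsCompl ⟨M, hM⟩ N := by
    have hc := o.isCompl (isCompl_compl (x := o.symm ⟨M, hM⟩))
    rw [o.apply_symm_apply] at hc
    exact ⟨_, hc⟩
  have hc : IsCompl M N.1 := by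
    constructor
    · rw [disjoint_iff]; exact congrArg Subtype.val hN.inf_eq_bot
    · rw [codisjoint_iff]; exact congrArg Subtype.val hN.sup_eq_top
  let E := M.projection N.1 hc
  have hEmem : ∀ x, E x ∈ M := fun x => Submodule.projection_apply_mem hc x
  have hEcomm : ∀ (g : C →ₗ[k] k) x, E (rop g x) = rop g (E x) := by
    intro g x
    have h1 : rop g (E x) ∈ M := hM (ropR g) (hEmem x)
    have h2 : rop g (x - E x) ∈ N.1 := N.2 (ropR g) (Submodule.sub_projection_mem hc x)
    have h3 : rop g x = rop g (E x) + rop g (x - E x) := by rw [← map_add]; simp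
    rw [h3, map_add, Submodule.projection_apply_of_mem_left hc h1,
      (Submodule.projection_apply_eq_zero_iff hc).2 h2, add_zero]
  refine ⟨counit ∘ₗ toLin E, fun x => ?_, fun x => ?_, fun a ha => ?_⟩
  · rw [← lin_eq_rop]
    refine dual_ext (k := k) fun f => ?_
    rw [← apply_rop]
    change counit (E (rop f x)) = _
    rw [hEcomm, counit_rop]
  · rw [← lin_eq_rop]; exact hEmem x
  · change counit (E a) = _
    rw [show E a = a from Submodule.projection_apply_of_mem_left hc ha]

end coalg

end QGaux
namespace QGaux

open QG Coalgebra

section hopf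
variable {k : Type u} [Field k] {G : Type u} [Ring G] [HopfAlgebra k G]

theorem slice_mul_tmul_one {H : Type u} [Ring H] [Algebra k H] (φ : G →ₗ[k] k) (y : G) (t : G ⊗[k] H) :
    TensorProduct.lid k H (φ.rTensor H (t * (y ⊗ₜ 1))) =
      TensorProduct.lid k H ((φ ∘ₗ LinearMap.mulRight k y).rTensor H t) := by
  induction t with
  | zero => simp
  | tmul a b => simp
  | add a b ha hb => simp only [map_add, add_mul, ha, hb]

theorem slice_one_tmul_mul {H : Type u} [Ring H] [Algebra k H] (φ : G →ₗ[k] k) (y : G) (t : H ⊗[k] G) :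
    TensorProduct.rid k H (φ.lTensor H ((1 ⊗ₜ y) * t)) =
      TensorProduct.rid k H ((φ ∘ₗ LinearMap.mulLeft k y).lTensor H t) := by
  induction t with
  | zero => simp
  | tmul a b => simp
  | add a b ha hb => simp only [map_add, mul_add, ha, hb]

theorem rop_mulRight (φ : G →ₗ[k] k) (y a : G) :
    rop (φ ∘ₗ LinearMap.mulRight k y) a =
      LinearMap.mul' k G (TensorProduct.map (rop φ ∘ₗ LinearMap.mulLeft k a)
        (HopfAlgebra.antipode k) (comul (R := k) y)) := by
  let m : G ⊗[k] G →ₗ[k] G := LinearMap.mul' k G ∘ₗ (HopfAlgebra.antipode k).lTensor G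
  have h0 : ∀ (t : G ⊗[k] G) (b c d : G),
      TensorProduct.lid k G (φ.rTensor G (t * (b ⊗ₜ c))) * HopfAlgebra.antipode k d =
      TensorProduct.lid k G (φ.rTensor G (t * m.lTensor G (b ⊗ₜ (c ⊗ₜ d)))) := by
    intro t b c d
    induction t with
    | zero => simp
    | tmul x y => simp [m, mul_assoc]
    | add x y hx hy => simp only [add_mul, map_add, hx, hy]
  have h1 : ∀ (u : G ⊗[k] G) (d : G),
      TensorProduct.lid k G (φ.rTensor G (comul a * u)) * HopfAlgebra.antipode k d =
      TensorProduct.lid k G (φ.rTensor G (comul a *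
        m.lTensor G (TensorProduct.assoc k G G G (u ⊗ₜ d)))) := by
    intro u d
    induction u with
    | zero => simp
    | tmul x y => rw [h0, TensorProduct.assoc_tmul]
    | add x y hx hy => simp only [add_mul, mul_add, map_add, TensorProduct.add_tmul, hx, hy]
  have h2 : ∀ s : G ⊗[k] G, LinearMap.mul' k G (TensorProduct.map (rop φ ∘ₗ LinearMap.mulLeft k a)
        (HopfAlgebra.antipode k) s) = TensorProduct.lid k G (φ.rTensor G (comul a *
        m.lTensor G (TensorProduct.assoc k G G G (comul.rTensor G s)))) := by
    intro s
    induction s with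
    | zero => simp
    | tmul x y =>
      rw [LinearMap.rTensor_tmul, ← h1, ← Bialgebra.comul_mul]
      simp [rop_def]
    | add x y hx hy => simp only [mul_add, map_add, hx, hy]
  rw [h2, coassoc_apply, ← LinearMap.lTensor_comp_apply]
  have h3 : m ∘ₗ comul = Algebra.linearMap k G ∘ₗ counit := by
    rw [← HopfAlgebra.mul_antipode_lTensor_comul]; rfl
  rw [h3, LinearMap.lTensor_comp_apply, lTensor_counit_comul, LinearMap.lTensor_tmul,
    Algebra.linearMap_apply, map_one, slice_mul_tmul_one, rop_def]

theorem lop_mulLeft (φ : G →ₗ[k] k) (y a : G) :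
    lop (φ ∘ₗ LinearMap.mulLeft k y) a =
      LinearMap.mul' k G (TensorProduct.map (HopfAlgebra.antipode k)
        (lop φ ∘ₗ LinearMap.mulRight k a) (comul (R := k) y)) := by
  let m : G ⊗[k] G →ₗ[k] G := LinearMap.mul' k G ∘ₗ (HopfAlgebra.antipode k).rTensor G
  have h0 : ∀ (t : G ⊗[k] G) (b c d : G),
      HopfAlgebra.antipode k d * TensorProduct.rid k G (φ.lTensor G ((b ⊗ₜ c) * t)) =
      TensorProduct.rid k G (φ.lTensor G (m.rTensor G ((d ⊗ₜ b) ⊗ₜ c) * t)) := by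
    intro t b c d
    induction t with
    | zero => simp
    | tmul x y => simp [m, mul_assoc]
    | add x y hx hy => simp only [mul_add, map_add, hx, hy]
  have h1 : ∀ (u : G ⊗[k] G) (d : G),
      HopfAlgebra.antipode k d * TensorProduct.rid k G (φ.lTensor G (u * comul a)) =
      TensorProduct.rid k G (φ.lTensor G (
        m.rTensor G ((TensorProduct.assoc k G G G).symm (d ⊗ₜ u)) * comul a)) := by
    intro u d
    induction u with
    | zero => simp
    | tmul x y => rw [h0, TensorProduct.assoc_symm_tmul]
    | add x y hx hy => simp only [add_mul, mul_add, map_add, TensorProduct.tmul_add, hx, hy]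
  have h2 : ∀ s : G ⊗[k] G, LinearMap.mul' k G (TensorProduct.map (HopfAlgebra.antipode k)
        (lop φ ∘ₗ LinearMap.mulRight k a) s) = TensorProduct.rid k G (φ.lTensor G (
        m.rTensor G ((TensorProduct.assoc k G G G).symm (comul.lTensor G s)) * comul a)) := by
    intro s
    induction s with
    | zero => simp
    | tmul x y =>
      rw [LinearMap.lTensor_tmul, ← h1, ← Bialgebra.comul_mul]
      simp [lop_def]
    | add x y hx hy => simp only [add_mul, map_add, hx, hy]
  rw [h2, coassoc_symm_apply, ← LinearMap.rTensor_comp_apply]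
  have h3 : m ∘ₗ comul = Algebra.linearMap k G ∘ₗ counit := by
    rw [← HopfAlgebra.mul_antipode_rTensor_comul]; rfl
  rw [h3, LinearMap.rTensor_comp_apply, rTensor_counit_comul, LinearMap.rTensor_tmul,
    Algebra.linearMap_apply, map_one, slice_one_tmul_mul, lop_def]

theorem phi_mul {A : Submodule k G} (hA : IsHopfSubalgebra k G A) (φ : G →ₗ[k] k)
    (hc : ∀ x, lop φ x = rop φ x) (hm : ∀ x, rop φ x ∈ A) (hφ : ∀ a ∈ A, φ a = counit (R := k) a)
    (x a : G) (ha : a ∈ A) : φ (x * a) = φ x * counit (R := k) a := by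
  obtain ⟨h1, hmul, hco, hS⟩ := hA
  let ψ := φ ∘ₗ LinearMap.mulRight k a
  have hψ : rop ψ x ∈ A := by
    rw [rop_mulRight]
    obtain ⟨t, ht⟩ := hco a ha
    rw [← ht]
    clear ht
    induction t with
    | zero => simp
    | tmul b c =>
      simp only [TensorProduct.map_tmul, LinearMap.mul'_apply]
      exact hmul _ (hm _) _ (hS ⟨_, c.2, rfl⟩)
    | add b c hb hc => simp only [map_add]; exact A.add_mem hb hc
  have e1 : φ (rop ψ x) = ψ x := by rw [hφ _ hψ, counit_rop]
  rw [apply_rop, hc] at e1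
  have e2 : φ (rop φ x * a) = φ (x * a) := e1
  rw [← e2, hφ _ (hmul _ (hm x) _ ha), Bialgebra.counit_mul, counit_rop]

theorem mem_qsl {H : Type u} [AddCommGroup H] [Module k H] [One H] (p : G →ₗ[k] H) (y : G) :
    y ∈ quotientSpaceLeft k G p ↔ p.lTensor G (comul (R := k) y) = y ⊗ₜ 1 := by
  simp [quotientSpaceLeft, sub_eq_zero]

theorem mem_qsr {H : Type u} [AddCommGroup H] [Module k H] [One H] (p : G →ₗ[k] H) (y : G) :
    y ∈ quotientSpaceRight k G p ↔ p.rTensor G (comul (R := k) y) = 1 ⊗ₜ y := by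
  simp [quotientSpaceRight, sub_eq_zero]

theorem left_main {H : Type u} [Ring H] [Algebra k H] (p : G →ₗ[k] H) (hp1 : p 1 = 1)
    (hpm : ∀ a b, p (a * b) = p a * p b) (φ : G →ₗ[k] k) (hinv : ∀ a, rop φ a = φ a • (1 : G))
    (h1 : φ 1 = 1)
    (hG : ∀ f : G →ₗ[k] k, (∀ a, p (rop f a) = f a • (1 : H)) → ∀ a, rop f a = f a • (1 : G)) :
    quotientSpaceLeft k G p = Submodule.span k {(1 : G)} := by
  set B := quotientSpaceLeft k G p with hB
  have hmulp : ∀ t s : G ⊗[k] G, p.lTensor G (t * s) = p.lTensor G t * p.lTensor G s := by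
    intro t s
    induction t with
    | zero => simp
    | add x y hx hy => simp only [add_mul, map_add, hx, hy]
    | tmul x y =>
      induction s with
      | zero => simp
      | add x y hx hy => simp only [mul_add, map_add, hx, hy]
      | tmul x y => simp [hpm]
  have hps : ∀ (f : G →ₗ[k] k) (t : G ⊗[k] G), p (TensorProduct.lid k G (f.rTensor G t)) =
      TensorProduct.lid k H (f.rTensor H (p.lTensor G t)) := by
    intro f t
    induction t with
    | zero => simp
    | add x y hx hy => simp only [map_add, hx, hy]
    | tmul x y => simp
  have c1 : ∀ y ∈ B, ∀ a, rop (φ ∘ₗ LinearMap.mulRight k y) a = φ (a * y) • (1 : G) := by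
    intro y hy
    refine hG _ fun a => ?_
    rw [rop_def, hps, ← slice_mul_tmul_one, ← (mem_qsl p y).1 hy, ← hmulp, ← hps,
      ← Bialgebra.comul_mul, ← rop_def, hinv, map_smul, hp1]
    rfl
  have hBc : ∀ y ∈ B, comul (R := k) y ∈ LinearMap.range (B.subtype.lTensor G) := by
    intro y hy
    refine mem_range_lTensor B _ fun f => ?_
    rw [← rop_def, hB, mem_qsl, comul_rop, ← LinearMap.comp_apply, LinearMap.lTensor_comp_rTensor,
      ← LinearMap.rTensor_comp_lTensor, LinearMap.comp_apply, (mem_qsl p y).1 hy,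
      LinearMap.rTensor_tmul]
  let S : G →ₗ[k] G := HopfAlgebra.antipode k
  have c4 : ∀ y ∈ B, S y = counit (R := k) y • (1 : G) := by
    intro y hy
    have hS : ∀ a, ∀ b ∈ B, LinearMap.mul' k G (TensorProduct.map (rop φ ∘ₗ LinearMap.mulLeft k a)
        S (comul (R := k) b)) = φ (a * b) • (1 : G) := by
      intro a b hb; rw [← rop_mulRight, c1 b hb]
    -- y₁ ⊗ y₂ ↦ φ(S(y₁) y₂) 1
    have e1 : LinearMap.mul' k G (S.rTensor G (comul (R := k) y)) = counit (R := k) y • (1 : G) := by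
      rw [HopfAlgebra.mul_antipode_rTensor_comul_apply, Algebra.algebraMap_eq_smul_one]
    -- the trilinear map
    let m : G ⊗[k] G →ₗ[k] G := LinearMap.mul' k G ∘ₗ S.rTensor G
    let Φ : (G ⊗[k] G) ⊗[k] G →ₗ[k] G :=
      LinearMap.mul' k G ∘ₗ TensorProduct.map (rop φ ∘ₗ m) S
    have e2 : ∀ t : G ⊗[k] G, t ∈ LinearMap.range (B.subtype.lTensor G) →
        Φ ((TensorProduct.assoc k G G G).symm (comul.lTensor G t)) = φ (m t) • (1 : G) := by
      rintro _ ⟨t, rfl⟩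
      induction t with
      | zero => simp
      | add x y hx hy => simp only [map_add, hx, hy, add_smul]
      | tmul x b =>
        have := hS (S x) b b.2
        simp only [LinearMap.lTensor_tmul, Submodule.subtype_apply]
        have e3 : m (x ⊗ₜ[k] (b : G)) = S x * b := by simp [m]
        rw [e3, ← this]
        generalize comul (R := k) (b : G) = s
        induction s with
        | zero => simp
        | add x y hx hy => simp only [map_add, TensorProduct.tmul_add, hx, hy]
        | tmul c d => simp [Φ, m]
    have e4 := e2 _ (hBc y hy)
    rw [coassoc_symm_apply] at e4
    have e5 : m (comul y) = counit (R := k) y • (1 : G) := e1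
    rw [e5, map_smul, h1, smul_eq_mul, mul_one] at e4
    rw [← e4]
    have e6 : ∀ t : G ⊗[k] G, Φ (comul.rTensor G t) = S (TensorProduct.lid k G (counit.rTensor G t)) := by
      intro t
      induction t with
      | zero => simp
      | add x y hx hy => simp only [map_add, hx, hy]
      | tmul a b =>
        have : m (comul a) = counit (R := k) a • (1 : G) := by
          change LinearMap.mul' k G (S.rTensor G (comul (R := k) a)) = _
          rw [HopfAlgebra.mul_antipode_rTensor_comul_apply, Algebra.algebraMap_eq_smul_one]
        simp [Φ, this, hinv, h1]
    rw [e6]; simp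
  have hle : B ≤ Submodule.span k {(1 : G)} := by
    intro y hy
    have e : ∀ t : G ⊗[k] G, t ∈ LinearMap.range (B.subtype.lTensor G) →
        LinearMap.mul' k G (S.lTensor G t) = TensorProduct.rid k G (counit.lTensor G t) := by
      rintro _ ⟨t, rfl⟩
      induction t with
      | zero => simp
      | add x y hx hy => simp only [map_add, hx, hy]
      | tmul x b => simp [c4 b b.2]
    have := e _ (hBc y hy)
    rw [HopfAlgebra.mul_antipode_lTensor_comul_apply, Algebra.algebraMap_eq_smul_one] at this
    rw [lTensor_counit_comul, TensorProduct.rid_tmul, one_smul] at this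
    rw [← this]
    exact Submodule.smul_mem _ _ (Submodule.mem_span_singleton_self _)
  refine le_antisymm hle ?_
  rw [Submodule.span_singleton_le_iff_mem, hB, mem_qsl, Bialgebra.comul_one,
    Algebra.TensorProduct.one_def, LinearMap.lTensor_tmul, hp1]

end hopf
end QGaux
namespace QGaux

open QG Coalgebra

section hopf2
variable {k : Type u} [Field k] {G : Type u} [Ring G] [HopfAlgebra k G]

theorem right_main {H : Type u} [Ring H] [Algebra k H] (p : G →ₗ[k] H) (hp1 : p 1 = 1)
    (hpm : ∀ a b, p (a * b) = p a * p b) (φ : G →ₗ[k] k) (hinv : ∀ a, lop φ a = φ a • (1 : G))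
    (h1 : φ 1 = 1)
    (hG : ∀ f : G →ₗ[k] k, (∀ a, p (lop f a) = f a • (1 : H)) → ∀ a, lop f a = f a • (1 : G)) :
    quotientSpaceRight k G p = Submodule.span k {(1 : G)} := by
  set B := quotientSpaceRight k G p with hB
  have hmulp : ∀ t s : G ⊗[k] G, p.rTensor G (t * s) = p.rTensor G t * p.rTensor G s := by
    intro t s
    induction t with
    | zero => simp
    | add x y hx hy => simp only [add_mul, map_add, hx, hy]
    | tmul x y =>
      induction s with
      | zero => simp
      | add x y hx hy => simp only [mul_add, map_add, hx, hy]
      | tmul x y => simp [hpm]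
  have hps : ∀ (f : G →ₗ[k] k) (t : G ⊗[k] G), p (TensorProduct.rid k G (f.lTensor G t)) =
      TensorProduct.rid k H (f.lTensor H (p.rTensor G t)) := by
    intro f t
    induction t with
    | zero => simp
    | add x y hx hy => simp only [map_add, hx, hy]
    | tmul x y => simp
  have c1 : ∀ y ∈ B, ∀ a, lop (φ ∘ₗ LinearMap.mulLeft k y) a = φ (y * a) • (1 : G) := by
    intro y hy
    refine hG _ fun a => ?_
    rw [lop_def, hps, ← slice_one_tmul_mul, ← (mem_qsr p y).1 hy, ← hmulp, ← hps,
      ← Bialgebra.comul_mul, ← lop_def, hinv, map_smul, hp1]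
    rfl
  have hBc : ∀ y ∈ B, comul (R := k) y ∈ LinearMap.range (B.subtype.rTensor G) := by
    intro y hy
    refine mem_range_rTensor B _ fun f => ?_
    rw [← lop_def, hB, mem_qsr, comul_lop, ← LinearMap.comp_apply, LinearMap.rTensor_comp_lTensor,
      ← LinearMap.lTensor_comp_rTensor, LinearMap.comp_apply, (mem_qsr p y).1 hy,
      LinearMap.lTensor_tmul]
  let S : G →ₗ[k] G := HopfAlgebra.antipode k
  have c4 : ∀ y ∈ B, S y = counit (R := k) y • (1 : G) := by
    intro y hy
    have hS : ∀ a, ∀ b ∈ B, LinearMap.mul' k G (TensorProduct.map S (lop φ ∘ₗ LinearMap.mulRight k a)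
        (comul (R := k) b)) = φ (b * a) • (1 : G) := by
      intro a b hb; rw [← lop_mulLeft, c1 b hb]
    let m : G ⊗[k] G →ₗ[k] G := LinearMap.mul' k G ∘ₗ S.lTensor G
    have e1 : ∀ y, m (comul (R := k) y) = counit (R := k) y • (1 : G) := by
      intro y
      change LinearMap.mul' k G (S.lTensor G (comul (R := k) y)) = _
      rw [HopfAlgebra.mul_antipode_lTensor_comul_apply, Algebra.algebraMap_eq_smul_one]
    let Φ : G ⊗[k] (G ⊗[k] G) →ₗ[k] G :=
      LinearMap.mul' k G ∘ₗ TensorProduct.map S (lop φ ∘ₗ m)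
    have e2 : ∀ t : G ⊗[k] G, t ∈ LinearMap.range (B.subtype.rTensor G) →
        Φ (TensorProduct.assoc k G G G (comul.rTensor G t)) = φ (m t) • (1 : G) := by
      rintro _ ⟨t, rfl⟩
      induction t with
      | zero => simp
      | add x y hx hy => simp only [map_add, hx, hy, add_smul]
      | tmul b x =>
        have := hS (S x) b b.2
        simp only [LinearMap.rTensor_tmul, Submodule.subtype_apply]
        have e3 : m ((b : G) ⊗ₜ[k] x) = b * S x := by simp [m]
        rw [e3, ← this]
        generalize comul (R := k) (b : G) = s
        induction s with
        | zero => simp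
        | add x y hx hy => simp only [map_add, TensorProduct.add_tmul, hx, hy]
        | tmul c d => simp [Φ, m]
    have e4 := e2 _ (hBc y hy)
    rw [coassoc_apply, e1, map_smul, h1, smul_eq_mul, mul_one] at e4
    rw [← e4]
    have e6 : ∀ t : G ⊗[k] G, Φ (comul.lTensor G t) = S (TensorProduct.rid k G (counit.lTensor G t)) := by
      intro t
      induction t with
      | zero => simp
      | add x y hx hy => simp only [map_add, hx, hy]
      | tmul a b => simp [Φ, e1 b, hinv, h1]
    rw [e6]; simp
  have hle : B ≤ Submodule.span k {(1 : G)} := by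
    intro y hy
    have e : ∀ t : G ⊗[k] G, t ∈ LinearMap.range (B.subtype.rTensor G) →
        LinearMap.mul' k G (S.rTensor G t) = TensorProduct.lid k G (counit.rTensor G t) := by
      rintro _ ⟨t, rfl⟩
      induction t with
      | zero => simp
      | add x y hx hy => simp only [map_add, hx, hy]
      | tmul b x => simp [c4 b b.2]
    have := e _ (hBc y hy)
    rw [HopfAlgebra.mul_antipode_rTensor_comul_apply, Algebra.algebraMap_eq_smul_one] at this
    rw [rTensor_counit_comul, TensorProduct.lid_tmul, one_smul] at this
    rw [← this]
    exact Submodule.smul_mem _ _ (Submodule.mem_span_singleton_self _)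
  refine le_antisymm hle ?_
  rw [Submodule.span_singleton_le_iff_mem, hB, mem_qsr, Bialgebra.comul_one,
    Algebra.TensorProduct.one_def, LinearMap.rTensor_tmul, hp1]

theorem rop_map {K : Type u} [AddCommGroup K] [Module k K] [Coalgebra k K] (q : G →ₗ[k] K)
    (hq : ∀ x, TensorProduct.map q q (comul (R := k) x) = comul (R := k) (q x)) (f : K →ₗ[k] k) (x : G) :
    rop f (q x) = q (rop (f ∘ₗ q) x) := by
  rw [rop_def, ← hq, rop_def]
  generalize comul (R := k) x = t
  induction t with
  | zero => simp
  | add x y hx hy => simp only [map_add, hx, hy]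
  | tmul x y => simp

theorem lop_map {K : Type u} [AddCommGroup K] [Module k K] [Coalgebra k K] (q : G →ₗ[k] K)
    (hq : ∀ x, TensorProduct.map q q (comul (R := k) x) = comul (R := k) (q x)) (f : K →ₗ[k] k) (x : G) :
    lop f (q x) = q (lop (f ∘ₗ q) x) := by
  rw [lop_def, ← hq, lop_def]
  generalize comul (R := k) x = t
  induction t with
  | zero => simp
  | add x y hx hy => simp only [map_add, hx, hy]
  | tmul x y => simp

/-- Linear-map version of the coinvariant part of the theorem. -/
theorem core {H K : Type u} [Ring H] [Algebra k H] [Ring K] [HopfAlgebra k K]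
    (hcss : IsCosemisimple k G) (π : G →ₗ[k] H)
    (hAeq : quotientSpaceLeft k G π = quotientSpaceRight k G π)
    (hHopf : IsHopfSubalgebra k G (quotientSpaceLeft k G π))
    (q : G →ₗ[k] K) (hqsurj : Function.Surjective q) (hq1 : q 1 = 1)
    (hq : ∀ x, TensorProduct.map q q (comul (R := k) x) = comul (R := k) (q x))
    (hker : LinearMap.ker q = leftIdealGen k (quotientSpaceLeft k G π ⊓
        LinearMap.ker (counit (R := k) (A := G))))
    (p : K →ₗ[k] H) (hp1 : p 1 = 1) (hpm : ∀ a b, p (a * b) = p a * p b) (hfact : p ∘ₗ q = π) :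
    quotientSpaceLeft k K p = Submodule.span k {(1 : K)} ∧
    quotientSpaceRight k K p = Submodule.span k {(1 : K)} := by
  set A := quotientSpaceLeft k G π with hAdef
  obtain ⟨φ, hc, hm, hφ⟩ := exists_phi hcss A hHopf.2.2.1
  have hqA : ∀ a ∈ A, q a = counit (R := k) a • (1 : K) := by
    intro a ha
    have : a - counit (R := k) a • (1 : G) ∈ LinearMap.ker q := by
      rw [hker]
      refine Submodule.subset_span ⟨1, _, ⟨A.sub_mem ha (A.smul_mem _ hHopf.1), ?_⟩, (one_mul _).symm⟩
      simp
    rw [LinearMap.mem_ker, map_sub, map_smul, hq1, sub_eq_zero] at this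
    exact this
  have hkerφ : LinearMap.ker q ≤ LinearMap.ker φ := by
    rw [hker]
    refine Submodule.span_le.2 ?_
    rintro _ ⟨g, a, ⟨ha, ha0⟩, rfl⟩
    have ha0' : counit (R := k) a = 0 := ha0
    change φ (g * a) = 0
    rw [phi_mul hHopf φ hc hm hφ g a ha, ha0', mul_zero]
  obtain ⟨s, hs⟩ := q.exists_rightInverse_of_surjective (LinearMap.range_eq_top.2 hqsurj)
  let φ' : K →ₗ[k] k := φ ∘ₗ s
  have hφ' : φ' ∘ₗ q = φ := by
    ext x
    change φ (s (q x)) = φ x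
    rw [← sub_eq_zero, ← map_sub]
    apply hkerφ
    rw [LinearMap.mem_ker, map_sub, ← LinearMap.comp_apply q s, hs]; simp
  have hφ'q : ∀ x, φ' (q x) = φ x := fun x => LinearMap.congr_fun hφ' x
  have hr : ∀ a, rop φ' a = φ' a • (1 : K) := by
    intro a; obtain ⟨x, rfl⟩ := hqsurj a
    rw [rop_map q hq, hφ', hqA _ (hm x), counit_rop, hφ'q]
  have hl : ∀ a, lop φ' a = φ' a • (1 : K) := by
    intro a; obtain ⟨x, rfl⟩ := hqsurj a
    rw [lop_map q hq, hφ', hc, hqA _ (hm x), counit_rop, hφ'q]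
  have h1 : φ' 1 = 1 := by
    rw [← hq1, hφ'q, hφ 1 hHopf.1, Bialgebra.counit_one]
  have hpq : ∀ x, π x = p (q x) := fun x => by rw [← hfact]; rfl
  constructor
  · refine left_main p hp1 hpm φ' hr h1 fun f hf a => ?_
    obtain ⟨x, rfl⟩ := hqsurj a
    have hz : rop (f ∘ₗ q) x ∈ A := by
      rw [hAeq, mem_qsr, comul_rop, ← LinearMap.rTensor_comp_apply]
      have : π ∘ₗ rop (f ∘ₗ q) = LinearMap.toSpanSingleton k H 1 ∘ₗ (f ∘ₗ q) := by
        ext y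
        simp [hpq, ← rop_map q hq, hf]
      rw [this, rop_def]
      generalize comul (R := k) x = t
      induction t with
      | zero => simp
      | add x y hx hy => simp only [map_add, TensorProduct.tmul_add, hx, hy]
      | tmul x y => simp [TensorProduct.smul_tmul]
    rw [rop_map q hq, hqA _ hz, counit_rop]; rfl
  · refine right_main p hp1 hpm φ' hl h1 fun f hf a => ?_
    obtain ⟨x, rfl⟩ := hqsurj a
    have hz : lop (f ∘ₗ q) x ∈ A := by
      rw [mem_qsl, comul_lop, ← LinearMap.lTensor_comp_apply]
      have : π ∘ₗ lop (f ∘ₗ q) = LinearMap.toSpanSingleton k H 1 ∘ₗ (f ∘ₗ q) := by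
        ext y
        simp [hpq, ← lop_map q hq, hf]
      rw [this, lop_def]
      generalize comul (R := k) x = t
      induction t with
      | zero => simp
      | add x y hx hy => simp only [map_add, TensorProduct.add_tmul, hx, hy]
      | tmul x y => simp [TensorProduct.smul_tmul]
    rw [lop_map q hq, hqA _ hz, counit_lop]; rfl

theorem simple_trivial {H : Type u} [Ring H] [Algebra k H]
    (p : G →ₗ[k] H) (hB : quotientSpaceLeft k G p = Submodule.span k {(1 : G)})
    {V : Type u} [AddCommGroup V] [Module k V] (ρ : V →ₗ[k] V ⊗[k] G)
    (hco : IsComod k G ρ) (hsim : IsSimpleComod k G ρ) (v : V) (hv : v ≠ 0)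
    (hinv : p.lTensor V (ρ v) = v ⊗ₜ (1 : H)) (w : V) : ρ w = w ⊗ₜ (1 : G) := by
  have hmem : ρ v ∈ LinearMap.range ((Submodule.span k {(1 : G)}).subtype.lTensor V) := by
    refine mem_range_lTensor _ _ fun ξ => ?_
    rw [← hB, mem_qsl]
    have a1 : ∀ t : V ⊗[k] G, p.lTensor G (comul (TensorProduct.lid k G (ξ.rTensor G t))) =
        TensorProduct.lid k (G ⊗[k] H) (ξ.rTensor (G ⊗[k] H)
          ((p.lTensor G).lTensor V (comul.lTensor V t))) := by
      intro t
      induction t with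
      | zero => simp
      | add x y hx hy => simp only [map_add, hx, hy]
      | tmul x y => simp
    have a2 : ∀ t : V ⊗[k] G, TensorProduct.lid k (G ⊗[k] H) (ξ.rTensor (G ⊗[k] H)
          ((p.lTensor G).lTensor V (TensorProduct.assoc k V G G (ρ.rTensor G t)))) =
        ((TensorProduct.lid k G).toLinearMap ∘ₗ ξ.rTensor G ∘ₗ ρ).rTensor H (p.lTensor V t) := by
      intro t
      induction t with
      | zero => simp
      | add x y hx hy => simp only [map_add, hx, hy]
      | tmul x y =>
        simp only [LinearMap.rTensor_tmul, LinearMap.lTensor_tmul, LinearMap.comp_apply]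
        generalize ρ x = s
        induction s with
        | zero => simp
        | add x y hx hy => simp only [map_add, TensorProduct.add_tmul, hx, hy]
        | tmul c d => simp [TensorProduct.smul_tmul']
    have hca := hco.coassoc v
    have hca' : comul.lTensor V (ρ v) = TensorProduct.assoc k V G G (ρ.rTensor G (ρ v)) := by
      rw [hca]; simp
    rw [a1, hca', a2, hinv]; simp
  have hv1 : ρ v = v ⊗ₜ (1 : G) := by
    have key : ∀ t : V ⊗[k] G, t ∈ LinearMap.range ((Submodule.span k {(1 : G)}).subtype.lTensor V) →
        t = TensorProduct.rid k V (counit.lTensor V t) ⊗ₜ (1 : G) := by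
      rintro _ ⟨t, rfl⟩
      induction t with
      | zero => simp
      | add x y hx hy =>
        simp only [map_add, TensorProduct.add_tmul]; rw [← hx, ← hy]
      | tmul x b =>
        obtain ⟨b, hb⟩ := b
        obtain ⟨c, rfl⟩ := Submodule.mem_span_singleton.1 hb
        simp [TensorProduct.smul_tmul]
    have := key _ hmem
    rwa [hco.counit v] at this
  have hsub : IsSubcomod k G ρ (Submodule.span k {v}) := by
    intro u hu
    obtain ⟨c, rfl⟩ := Submodule.mem_span_singleton.1 hu
    refine ⟨(⟨c • v, hu⟩ : Submodule.span k {v}) ⊗ₜ 1, ?_⟩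
    simp [hv1, TensorProduct.smul_tmul']
  rcases hsim.2.2 _ le_top hsub with h | h
  · exact absurd (Submodule.span_singleton_eq_bot.1 h) hv
  · have hw : w ∈ Submodule.span k {v} := by rw [h]; trivial
    obtain ⟨c, rfl⟩ := Submodule.mem_span_singleton.1 hw
    simp [hv1, TensorProduct.smul_tmul']

end hopf2
end QGaux

open QG HopfAlgebra in
/-- With `π : O(G) → O(H)` surjective, `O(G)` cosemisimple,
`A := O(G/H) = O(H\G)` a Hopf subalgebra, and `O(K) := O(G)/O(G)A⁻` the
corresponding Hopf algebra quotient (given here as a Hopf algebra `K` with a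
surjection `q` of kernel `O(G)A⁻` through which `π` factors via `p`), every
simple right `O(K)`-comodule whose restriction to `O(H)` has a nonzero
invariant vector is trivial; equivalently `O(K/H) = O(H\K) = k`. -/
theorem statement_5 (k : Type u) [Field k] [IsAlgClosed k]
    (G H K : Type u) [Ring G] [HopfAlgebra k G] [Ring H] [HopfAlgebra k H]
    [Ring K] [HopfAlgebra k K]
    (π : G →ₐc[k] H) (hsurj : Function.Surjective π)
    (hcss : IsCosemisimple k G)
    (hAeq : quotientSpaceLeft k G (π : G →ₗ[k] H) =
      quotientSpaceRight k G (π : G →ₗ[k] H))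
    (hHopf : IsHopfSubalgebra k G (quotientSpaceLeft k G (π : G →ₗ[k] H)))
    (q : G →ₐc[k] K) (hqsurj : Function.Surjective q)
    (hker : LinearMap.ker (q : G →ₗ[k] K) =
      leftIdealGen k (quotientSpaceLeft k G (π : G →ₗ[k] H) ⊓
        LinearMap.ker (Coalgebra.counit (R := k) (A := G))))
    (p : K →ₐc[k] H) (hfact : p.comp q = π) :
    (∀ X : SimpleComodule k K,
      (∃ v : X.V, v ≠ 0 ∧ IsInvariant k H (cores k K (p : K →ₗ[k] H) X.ρ) v) →
      ∀ v : X.V, X.ρ v = v ⊗ₜ[k] (1 : K)) ∧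
    quotientSpaceLeft k K (p : K →ₗ[k] H) = Submodule.span k {(1 : K)} ∧
    quotientSpaceRight k K (p : K →ₗ[k] H) = Submodule.span k {(1 : K)} := by
  have hc := QGaux.core (k := k) hcss (π : G →ₗ[k] H) hAeq hHopf (q : G →ₗ[k] K) hqsurj
    (map_one q) (fun x => CoalgHomClass.map_comp_comul_apply q x) hker (p : K →ₗ[k] H)
    (map_one p) (fun a b => map_mul p a b) (by rw [← hfact]; rfl)
  refine ⟨fun X hX w => ?_, hc⟩
  obtain ⟨v, hv, hinv⟩ := hX
  exact QGaux.simple_trivial (p : K →ₗ[k] H) hc.1 X.ρ X.isComod X.isSimple v hv hinv w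
end

section
/- Let H be a Hopf algebra with bijective antipode and V a simple finite-dimensional right H-comodule whose coefficient coalgebra C_V = V*⊗V satisfies S²(C_V) = C_V. Then V is isomorphic to its double dual V** as an H-comodule, and the H-comodule V*⊗V (the tensor product of the contragredient comodule V* with V, i.e. C_V equipped with the right adjoint coaction) contains a nonzero invariant vector, namely the image of the coevaluation k → V*⊗V** ≅ V*⊗V. -/
/- Common infrastructure: right comodules over coalgebras, simplicity,
cosemisimplicity, subcoalgebras, adjoint coactions, normality, etc. -/

open TensorProduct

universe u

namespace QG

variable (k : Type u) [Field k]
variable {H : Type u} [Ring H] [HopfAlgebra k H]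
variable {V : Type u} [AddCommGroup V] [Module k V]

/-- `φ ↦ (v ↦ φ(v₀) S(v₁))`, the map underlying the contragredient coaction. -/
noncomputable def dualPrecoact (ρ : V →ₗ[k] V ⊗[k] H) :
    Module.Dual k V →ₗ[k] (V →ₗ[k] H) where
  toFun φ := (TensorProduct.lid k H).toLinearMap ∘ₗ
    (TensorProduct.map φ (HopfAlgebra.antipode (R := k) (A := H))) ∘ₗ ρ
  map_add' φ ψ := by
    simp [TensorProduct.map_add_left, LinearMap.add_comp, LinearMap.comp_add]
  map_smul' c φ := by
    simp [TensorProduct.map_smul_left, LinearMap.smul_comp, LinearMap.comp_smul]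

/-- The contragredient (left-dual) coaction on `V*` for a finite-dimensional
right `H`-comodule `(V, ρ)`, characterized by
`φ₀(v) ⊗ φ₁ = φ(v₀) ⊗ S(v₁)`. -/
noncomputable def dualCoact [FiniteDimensional k V] (ρ : V →ₗ[k] V ⊗[k] H) :
    Module.Dual k V →ₗ[k] (Module.Dual k V) ⊗[k] H :=
  (dualTensorHomEquiv k V H).symm.toLinearMap ∘ₗ dualPrecoact k ρ

end QG


namespace QG8

open HopfAlgebra Coalgebra

section
variable {k : Type u} [Field k] {ι : Type} [Fintype ι] [DecidableEq ι]

theorem exists_coeffs {V C : Type u} [AddCommGroup V] [Module k V] [AddCommGroup C] [Module k C]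
    (b : Module.Basis ι k V) (ρ : V →ₗ[k] V ⊗[k] C) :
    ∃ a : ι → ι → C, ∀ j, ρ (b j) = ∑ i, b i ⊗ₜ[k] a i j := by
  refine ⟨fun i j => TensorProduct.equivFinsuppOfBasisLeft b (ρ (b j)) i, fun j => ?_⟩
  conv_lhs => rw [← (TensorProduct.equivFinsuppOfBasisLeft b).symm_apply_apply (ρ (b j)),
    TensorProduct.equivFinsuppOfBasisLeft_symm_apply]
  rw [Finsupp.sum_fintype]
  simp

theorem basis_tmul_inj {V C : Type u} [AddCommGroup V] [Module k V] [AddCommGroup C] [Module k C]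
    (b : Module.Basis ι k V) {x y : ι → C}
    (h : ∑ i, b i ⊗ₜ[k] x i = ∑ i, b i ⊗ₜ[k] y i) (i : ι) : x i = y i := by
  have := congrArg (fun z => TensorProduct.lid k C ((b.coord i).rTensor C z)) h
  simpa [Finsupp.single_apply, ite_smul] using this

structure Comat {H : Type u} [AddCommGroup H] [Module k H] [Coalgebra k H] (a : ι → ι → H) :
    Prop where
  comul : ∀ i j, comul (R := k) (a i j) = ∑ l, a i l ⊗ₜ[k] a l j
  counit : ∀ i j, counit (R := k) (a i j) = if i = j then 1 else 0

theorem comat_of_isComod {V H : Type u} [AddCommGroup V] [Module k V]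
    [AddCommGroup H] [Module k H] [Coalgebra k H] (b : Module.Basis ι k V)
    (ρ : V →ₗ[k] V ⊗[k] H) (hcom : QG.IsComod k H ρ) (a : ι → ι → H)
    (ha : ∀ j, ρ (b j) = ∑ i, b i ⊗ₜ[k] a i j) : Comat (k := k) a where
  comul i j := by
    have h := congrArg (TensorProduct.assoc k V H H) (hcom.coassoc (b j))
    simp only [ha, map_sum, LinearMap.rTensor_tmul, LinearMap.lTensor_tmul,
      TensorProduct.sum_tmul, LinearEquiv.coe_coe, LinearEquiv.apply_symm_apply,
      TensorProduct.assoc_tmul] at h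
    rw [Finset.sum_comm] at h
    simp only [← TensorProduct.tmul_sum] at h
    exact (basis_tmul_inj b h i).symm
  counit i j := by
    have h := congrArg (b.coord i) (hcom.counit (b j))
    simpa [ha, Finsupp.single_apply, eq_comm] using h

variable {H : Type u} [Ring H] [HopfAlgebra k H]

theorem Comat.antipode_mul {a : ι → ι → H} (h : Comat (k := k) a) (i j : ι) :
    ∑ l, antipode k (a i l) * a l j = if i = j then 1 else 0 := by
  have := mul_antipode_rTensor_comul_apply (R := k) (a i j)
  rw [h.comul, h.counit] at this
  simp only [map_sum, LinearMap.rTensor_tmul, LinearMap.mul'_apply] at this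
  rw [this]; split_ifs <;> simp

theorem Comat.mul_antipode {a : ι → ι → H} (h : Comat (k := k) a) (i j : ι) :
    ∑ l, a i l * antipode k (a l j) = if i = j then 1 else 0 := by
  have := mul_antipode_lTensor_comul_apply (R := k) (a i j)
  rw [h.comul, h.counit] at this
  simp only [map_sum, LinearMap.lTensor_tmul, LinearMap.mul'_apply] at this
  rw [this]; split_ifs <;> simp

theorem Comat.dual {a : ι → ι → H} (h : Comat (k := k) a) :
    Comat (k := k) (fun i j => antipode k (a j i)) where
  counit i j := by simp [h.counit, eq_comm]
  comul i j := by
    let X : Matrix ι ι (H ⊗[k] H) := .of fun i j => Coalgebra.comul (R := k) (a i j)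
    let Y : Matrix ι ι (H ⊗[k] H) := .of fun i j => Coalgebra.comul (R := k) (antipode k (a i j))
    let Z : Matrix ι ι (H ⊗[k] H) := .of fun i j => ∑ l, antipode k (a l j) ⊗ₜ[k] antipode k (a i l)
    have hYX : Y * X = 1 := by
      ext i j
      simp only [X, Y, Matrix.mul_apply, Matrix.of_apply, ← Bialgebra.comul_mul]
      rw [← map_sum, h.antipode_mul, Matrix.one_apply]
      split_ifs <;> simp
    have hXZ : X * Z = 1 := by
      ext i j
      simp only [X, Z, Matrix.mul_apply, Matrix.of_apply, h.comul, Finset.sum_mul_sum,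
        Algebra.TensorProduct.tmul_mul_tmul]
      rw [Finset.sum_comm]
      have : ∀ p : ι, (∑ l, ∑ q, (a i p * antipode k (a q j)) ⊗ₜ[k] (a p l * antipode k (a l q)))
          = (a i p * antipode k (a p j)) ⊗ₜ[k] (1 : H) := by
        intro p
        rw [Finset.sum_comm]
        simp only [← TensorProduct.tmul_sum, h.mul_antipode]
        simp [TensorProduct.tmul_ite]
      simp only [this]
      rw [← TensorProduct.sum_tmul, h.mul_antipode, Matrix.one_apply]
      split_ifs <;> simp [Algebra.TensorProduct.one_def]
    have := congrArg (fun M : Matrix ι ι (H ⊗[k] H) => M j i) (left_inv_eq_right_inv hYX hXZ)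
    simpa [Y, Z] using this

theorem dualCoact_basis {V : Type u} [AddCommGroup V] [Module k V] [FiniteDimensional k V]
    (b : Module.Basis ι k V)
    (ρ : V →ₗ[k] V ⊗[k] H) (a : ι → ι → H)
    (ha : ∀ j, ρ (b j) = ∑ i, b i ⊗ₜ[k] a i j) (j : ι) :
    QG.dualCoact k ρ (b.dualBasis j) = ∑ i, b.dualBasis i ⊗ₜ[k] antipode k (a j i) := by
  unfold QG.dualCoact
  rw [LinearMap.comp_apply, LinearEquiv.coe_coe, LinearEquiv.symm_apply_eq]
  refine b.ext fun l => ?_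
  simp [QG.dualPrecoact, ha, dualTensorHomEquiv, Finsupp.single_apply, ite_smul]

theorem coev_hom (W : Type u) [AddCommGroup W] [Module k W] [FiniteDimensional k W] :
    dualTensorHomEquiv k W W (TensorProduct.comm k _ _ (coevaluation k W 1)) = LinearMap.id := by
  rw [coevaluation_apply_one]
  ext w
  simpa [dualTensorHomEquiv] using (Module.Basis.ofVectorSpace k W).sum_repr w

theorem coev_basis {W : Type u} [AddCommGroup W] [Module k W] [FiniteDimensional k W]
    (c : Module.Basis ι k W) :
    coevaluation k W 1 = ∑ i, c i ⊗ₜ[k] c.dualBasis i := by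
  apply (TensorProduct.comm k _ _).injective
  apply (dualTensorHomEquiv k W W).injective
  rw [coev_hom]
  ext w
  simp [dualTensorHomEquiv]

theorem burnside [IsAlgClosed k] {V : Type u} [AddCommGroup V] [Module k V]
    [FiniteDimensional k V] [Nontrivial V] (A : Subalgebra k (Module.End k V))
    (hA : ∀ U : Submodule k V, (∀ T ∈ A, ∀ u ∈ U, T u ∈ U) → U = ⊥ ∨ U = ⊤) : A = ⊤ := by
  classical
  have hs : IsSimpleModule A V := by
    rw [isSimpleModule_iff]
    refine { exists_pair_ne := ⟨⊥, ⊤, bot_ne_top⟩, eq_bot_or_eq_top := fun U => ?_ }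
    rcases hA (U.restrictScalars k) (fun T hT u hu => U.smul_mem ⟨T, hT⟩ hu) with h | h
    · left; simpa using h
    · right; simpa using h
  have hbij := IsSimpleModule.algebraMap_end_bijective_of_isAlgClosed (A := A) (V := V) k
  rw [eq_top_iff]
  intro T _
  let T' : Module.End (Module.End A V) V :=
    { toFun := T
      map_add' := map_add T
      map_smul' := fun f v => by
        obtain ⟨c, rfl⟩ := hbij.2 f
        simp }
  obtain ⟨r, hr⟩ := jacobson_density (R := A) (M := V) T' (Finset.univ.image (Module.finBasis k V))
  have : T = r.1 := by
    refine (Module.finBasis k V).ext fun i => ?_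
    exact hr _ (by simp)
  rw [this]; exact r.2

theorem mem_range_rTensor {V C : Type u} [AddCommGroup V] [Module k V] [AddCommGroup C] [Module k C]
    (U : Submodule k V) (x : V ⊗[k] C)
    (h : ∀ f : C →ₗ[k] k, TensorProduct.rid k V (f.lTensor V x) ∈ U) :
    x ∈ LinearMap.range (U.subtype.rTensor C) := by
  classical
  have hex := rTensor_exact C (f := U.subtype) (g := U.mkQ)
    (LinearMap.exact_subtype_mkQ U) (Submodule.mkQ_surjective U)
  refine (hex x).1 ?_
  let c := Module.Basis.ofVectorSpace k C
  apply (TensorProduct.equivFinsuppOfBasisRight c).injective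
  ext i
  rw [TensorProduct.equivFinsuppOfBasisRight_apply, map_zero, Finsupp.zero_apply]
  have : ∀ y : V ⊗[k] C, TensorProduct.rid k _ ((c.coord i).lTensor (V ⧸ U) (U.mkQ.rTensor C y))
      = U.mkQ (TensorProduct.rid k V ((c.coord i).lTensor V y)) := by
    intro y
    induction y with
    | zero => simp
    | add y z hy hz => simp only [map_add, hy, hz]
    | tmul v w => simp
  rw [this]
  simpa using h _

theorem coeffSpace_eq {V C : Type u} [AddCommGroup V] [Module k V]
    [AddCommGroup C] [Module k C] [Coalgebra k C] (b : Module.Basis ι k V)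
    (ρ : V →ₗ[k] V ⊗[k] C) (a : ι → ι → C)
    (ha : ∀ j, ρ (b j) = ∑ i, b i ⊗ₜ[k] a i j) :
    QG.coeffSpace k C ρ = Submodule.span k (Set.range fun p : ι × ι => a p.1 p.2) := by
  apply le_antisymm
  · refine sInf_le fun v => ?_
    set D := Submodule.span k (Set.range fun p : ι × ι => a p.1 p.2)
    suffices h : (⊤ : Submodule k V) ≤ (LinearMap.range (D.subtype.lTensor V)).comap ρ from
      h trivial
    rw [← b.span_eq, Submodule.span_le]
    rintro _ ⟨j, rfl⟩
    simp only [SetLike.mem_coe, Submodule.mem_comap, ha]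
    refine Submodule.sum_mem _ fun i _ => ?_
    exact ⟨b i ⊗ₜ ⟨a i j, Submodule.subset_span ⟨(i, j), rfl⟩⟩, by simp⟩
  · rw [Submodule.span_le]
    rintro _ ⟨⟨i, j⟩, rfl⟩
    simp only [SetLike.mem_coe, QG.coeffSpace, Submodule.mem_sInf, Set.mem_ofPred_eq]
    intro D hD
    obtain ⟨x, hx⟩ := hD (b j)
    have h1 : TensorProduct.lid k C ((b.coord i).rTensor C (ρ (b j))) = a i j := by
      simp [ha, Finsupp.single_apply, ite_smul]
    rw [← h1, ← hx]
    clear hx h1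
    induction x with
    | zero => simp
    | add y z hy hz => simp only [map_add]; exact D.add_mem hy hz
    | tmul v w => simpa using D.smul_mem _ w.2

/-- evaluation of a functional on a matrix -/
def ev (a : ι → ι → H) : (H →ₗ[k] k) →ₗ[k] Matrix ι ι k where
  toFun f := .of fun i j => f (a i j)
  map_add' _ _ := rfl
  map_smul' _ _ := rfl

theorem ev_apply (a : ι → ι → H) (f : H →ₗ[k] k) (i j : ι) : ev a f i j = f (a i j) := rfl

/-- convolution of functionals -/
noncomputable def cmul (f g : H →ₗ[k] k) : H →ₗ[k] k :=
  LinearMap.mul' k k ∘ₗ TensorProduct.map f g ∘ₗ Coalgebra.comul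

theorem ev_cmul {a : ι → ι → H} (h : Comat (k := k) a) (f g : H →ₗ[k] k) :
    ev a (cmul f g) = ev a f * ev a g := by
  ext i j
  simp [ev_apply, cmul, h.comul, Matrix.mul_apply]

theorem ev_counit {a : ι → ι → H} (h : Comat (k := k) a) :
    ev a (Coalgebra.counit (R := k)) = 1 := by
  ext i j
  simp [ev_apply, h.counit, Matrix.one_apply]

theorem ev_surjective [IsAlgClosed k] {V : Type u} [AddCommGroup V] [Module k V]
    [FiniteDimensional k V] (b : Module.Basis ι k V)
    (ρ : V →ₗ[k] V ⊗[k] H) (hsim : QG.IsSimpleComod k H ρ) (a : ι → ι → H)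
    (ha : ∀ j, ρ (b j) = ∑ i, b i ⊗ₜ[k] a i j) (h : Comat (k := k) a) :
    Function.Surjective (ev (k := k) a) := by
  have hV : Nontrivial V := by
    by_contra hn
    rw [not_nontrivial_iff_subsingleton] at hn
    exact hsim.2.1 (Subsingleton.elim _ _)
  let e := Matrix.toLinAlgEquiv b
  have hact : ∀ (f : H →ₗ[k] k) (v : V),
      e (ev a f) v = TensorProduct.rid k V (f.lTensor V (ρ v)) := by
    intro f v
    suffices h : (e (ev a f) : V →ₗ[k] V) =
        (TensorProduct.rid k V).toLinearMap ∘ₗ f.lTensor V ∘ₗ ρ from LinearMap.congr_fun h v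
    refine b.ext fun j => ?_
    simp [e, ha, ev_apply, Matrix.toLinAlgEquiv_self]
  let A : Subalgebra k (Module.End k V) :=
    { carrier := Set.range fun f => e (ev a f)
      mul_mem' := by
        rintro _ _ ⟨f, rfl⟩ ⟨g, rfl⟩
        exact ⟨cmul f g, by simp only [ev_cmul h, map_mul]⟩
      add_mem' := by
        rintro _ _ ⟨f, rfl⟩ ⟨g, rfl⟩
        exact ⟨f + g, by simp only [map_add]⟩
      algebraMap_mem' := fun c =>
        ⟨c • Coalgebra.counit (R := k), by
          simp only [map_smul, ev_counit h, map_one, Algebra.algebraMap_eq_smul_one]⟩ }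
  have hA : A = ⊤ := by
    refine burnside A fun U hU => ?_
    refine hsim.2.2 U le_top fun u hu => ?_
    refine mem_range_rTensor U _ fun f => ?_
    rw [← hact]
    exact hU _ ⟨f, rfl⟩ u hu
  intro M
  have : e M ∈ A := hA ▸ trivial
  obtain ⟨f, hf⟩ := this
  exact ⟨f, e.injective hf⟩

/-- Skolem-Noether for comatrices. -/
theorem comat_conj {a t : ι → ι → H} (h : Comat (k := k) a) (ht : Comat (k := k) t)
    (hsurj : Function.Surjective (ev (k := k) a))
    (hker : ∀ f : H →ₗ[k] k, ev a f = 0 ↔ ev t f = 0) :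
    ∃ T : (ι → k) ≃ₗ[k] (ι → k), ∀ i j,
      ∑ l, T (Pi.single j 1) l • t i l = ∑ l, T (Pi.single l 1) i • a l j := by
  have hwd : ∀ f g : H →ₗ[k] k, ev a f = ev a g → ev t f = ev t g := by
    intro f g hfg
    rw [← sub_eq_zero, ← map_sub] at hfg ⊢
    exact (hker _).1 hfg
  let s := Function.surjInv hsurj
  have hs : ∀ M, ev a (s M) = M := Function.surjInv_eq hsurj
  let τ : Matrix ι ι k →ₐ[k] Matrix ι ι k := AlgHom.ofLinearMap
    { toFun := fun M => ev t (s M)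
      map_add' := fun M N => by
        rw [← map_add]; exact hwd _ _ (by rw [map_add, hs, hs, hs])
      map_smul' := fun c M => by
        rw [RingHom.id_apply, ← map_smul]; exact hwd _ _ (by rw [map_smul, hs, hs]) }
    (by
      show ev t (s 1) = 1
      exact (hwd _ _ (by rw [hs, ev_counit h])).trans (ev_counit ht))
    (fun M N => by
      show ev t (s (M * N)) = ev t (s M) * ev t (s N)
      rw [← ev_cmul ht]; exact hwd _ _ (by rw [hs, ev_cmul h, hs, hs]))
  have hτ : ∀ f, τ (ev a f) = ev t f := fun f => hwd _ _ (hs _)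
  have hinj : Function.Injective τ := by
    rw [injective_iff_map_eq_zero]
    intro M hM
    rw [← hs M, hτ] at hM
    rw [← hs M]; exact (hker _).2 hM
  have hbij : Function.Bijective τ :=
    ⟨hinj, (LinearMap.injective_iff_surjective (f := τ.toLinearMap)).1 hinj⟩
  let E := Matrix.toLinAlgEquiv' (R := k) (n := ι)
  obtain ⟨T, hT⟩ := ((E.symm.trans (AlgEquiv.ofBijective τ hbij)).trans E).eq_linearEquivConjAlgEquiv
  refine ⟨T, fun i j => ?_⟩
  rw [← sub_eq_zero, ← Module.forall_dual_apply_eq_zero_iff k]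
  intro f
  have h1 := congrArg (fun e => e (E (ev a f)) (T (Pi.single j 1)) i) hT
  simp only [AlgEquiv.trans_apply, AlgEquiv.symm_apply_apply, AlgEquiv.coe_ofBijective, hτ,
    LinearEquiv.conjAlgEquiv_apply, LinearMap.comp_apply, LinearEquiv.coe_coe,
    LinearEquiv.symm_apply_apply] at h1
  have h2 : E (ev t f) (T (Pi.single j 1)) i = ∑ l, T (Pi.single j 1) l * f (t i l) := by
    simp [E, ev_apply, Matrix.mulVec, dotProduct, mul_comm]
  have h3 : E (ev a f) (Pi.single j 1) = ∑ l, f (a l j) • Pi.single l (1 : k) := by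
    ext l
    simp [E, ev_apply, Finset.sum_apply, Pi.single_apply]
  rw [h2, h3] at h1
  simp only [map_sum, map_smul, Finset.sum_apply, Pi.smul_apply, smul_eq_mul] at h1
  rw [map_sub, map_sum, map_sum, sub_eq_zero]
  simp only [map_smul, smul_eq_mul]
  rw [h1]
  exact Finset.sum_congr rfl fun l _ => mul_comm _ _
end

end QG8

open QG HopfAlgebra in
/-- Let `H` be a Hopf algebra with bijective antipode and
`V` a simple finite-dimensional right `H`-comodule whose coefficient
coalgebra `C_V` satisfies `S²(C_V) = C_V`.  Then `V ≅ V**` as `H`-comodules,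
and the comodule `V* ⊗ V**` (`≅ V* ⊗ V = C_V` with the adjoint coaction)
contains a nonzero invariant vector, namely the image of the coevaluation. -/
theorem statement_8 (k : Type u) [Field k] [IsAlgClosed k]
    (H : Type u) [Ring H] [HopfAlgebra k H]
    (hbij : Function.Bijective (antipode (R := k) (A := H)))
    (V : Type u) [AddCommGroup V] [Module k V] [FiniteDimensional k V]
    (ρ : V →ₗ[k] V ⊗[k] H) (hcom : IsComod k H ρ) (hsim : IsSimpleComod k H ρ)
    (hS2 : (coeffSpace k H ρ).map
        ((antipode (R := k) (A := H)) ∘ₗ (antipode (R := k) (A := H))) =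
      coeffSpace k H ρ) :
    (∃ e : V ≃ₗ[k] Module.Dual k (Module.Dual k V),
      IsComodHom k H ρ (dualCoact k (dualCoact k ρ)) e.toLinearMap) ∧
    (coevaluation k (Module.Dual k V)) 1 ≠ 0 ∧
    IsInvariant k H
      (tensorCoact k H (dualCoact k ρ) (dualCoact k (dualCoact k ρ)))
      ((coevaluation k (Module.Dual k V)) 1) := by
  classical
  let b := Module.finBasis k V
  obtain ⟨a, ha⟩ := QG8.exists_coeffs b ρ
  have hc := QG8.comat_of_isComod b ρ hcom a ha
  have hd := QG8.dualCoact_basis b ρ a ha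
  have hdd := QG8.dualCoact_basis b.dualBasis (dualCoact k ρ) _ hd
  have hV : Nontrivial V := by
    by_contra hn
    rw [not_nontrivial_iff_subsingleton] at hn
    exact hsim.2.1 (Subsingleton.elim _ _)
  refine ⟨?_, ?_, ?_⟩
  · have hspan := QG8.coeffSpace_eq b ρ a ha
    rw [hspan, Submodule.map_span, ← Set.range_comp] at hS2
    have key : ∀ (x : Fin (Module.finrank k V) → Fin (Module.finrank k V) → H) (f : H →ₗ[k] k),
        QG8.ev x f = 0 ↔ Submodule.span k (Set.range fun p : _ × _ => x p.1 p.2) ≤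
          LinearMap.ker f := by
      intro x f
      rw [Submodule.span_le]
      constructor
      · rintro h _ ⟨⟨i, j⟩, rfl⟩
        exact congrFun (congrFun h i) j
      · intro h
        ext i j
        exact h ⟨(i, j), rfl⟩
    obtain ⟨T, hT⟩ := QG8.comat_conj hc hc.dual.dual
      (QG8.ev_surjective b ρ hsim a ha hc) (fun f => by
        rw [key, key, ← hS2]; rfl)
    let b2 := b.dualBasis.dualBasis
    refine ⟨b.equivFun.trans (T.trans b2.equivFun.symm), ?_⟩
    have he : ∀ j, (b.equivFun.trans (T.trans b2.equivFun.symm)) (b j) =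
        ∑ l, T (Pi.single j 1) l • b2 l := by
      intro j
      have h1 : b.equivFun (b j) = Pi.single j 1 := by
        ext i
        simp [Finsupp.single_apply, Pi.single_apply, eq_comm]
      rw [LinearEquiv.trans_apply, LinearEquiv.trans_apply, h1,
        Module.Basis.equivFun_symm_apply]
    refine b.ext fun j => ?_
    simp only [LinearMap.comp_apply, LinearEquiv.coe_coe, he, ha, map_sum, map_smul,
      LinearMap.rTensor_tmul]
    simp only [b2, hdd, Finset.smul_sum, TensorProduct.sum_tmul]
    rw [Finset.sum_comm]
    conv_rhs => rw [Finset.sum_comm]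
    refine Finset.sum_congr rfl fun i _ => ?_
    simp only [← TensorProduct.tmul_smul, TensorProduct.smul_tmul, ← TensorProduct.tmul_sum]
    exact congrArg _ (hT i j)
  · intro h0
    have h1 := QG8.coev_hom (k := k) (Module.Dual k V)
    rw [h0, map_zero, map_zero] at h1
    obtain ⟨φ, hφ⟩ := exists_ne (0 : Module.Dual k V)
    exact hφ (LinearMap.congr_fun h1 φ).symm
  · unfold QG.IsInvariant
    rw [QG8.coev_basis b.dualBasis]
    simp only [tensorCoact, LinearMap.comp_apply, map_sum, TensorProduct.map_tmul, hd, hdd,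
      TensorProduct.sum_tmul, TensorProduct.tmul_sum, LinearEquiv.coe_coe,
      TensorProduct.tensorTensorTensorComm_tmul, LinearMap.lTensor_tmul, LinearMap.mul'_apply]
    have hm := hc.dual.mul_antipode
    have : ∀ p q, (∑ i, (b.dualBasis q ⊗ₜ[k] b.dualBasis.dualBasis p) ⊗ₜ[k]
        (antipode k (a i q) * antipode k (antipode k (a p i)))) =
        if q = p then (b.dualBasis q ⊗ₜ[k] b.dualBasis.dualBasis p) ⊗ₜ[k] (1 : H) else 0 := by
      intro p q
      rw [← TensorProduct.tmul_sum, hm q p]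
      split_ifs <;> simp
    rw [Finset.sum_comm]
    refine Finset.sum_congr rfl fun p _ => ?_
    rw [Finset.sum_comm]
    simp only [this, Finset.sum_ite_eq', Finset.mem_univ, if_true]
end

section
/- Let k → A → H → B → k be an exact sequence of cosemisimple Hopf algebras. Then ∼_H is an equivalence relation on the set Ĥ of isomorphism classes of simple right H-comodules, and for V, W ∈ Ĥ the following are equivalent: (1) V ∼_H W, i.e. hom^B(V,W) ≠ 0; (2) V and W, corestricted to B, have the same simple constituents; (3) V embeds into W⊗A as a right H-comodule, where W⊗A carries the tensor-product H-comodule structure. -/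
/- Common infrastructure: right comodules over coalgebras, simplicity,
cosemisimplicity, subcoalgebras, adjoint coactions, normality, etc. -/

open TensorProduct

universe u

namespace QG9
open QG

section lin
variable {k : Type u} [Field k]
variable {V W C : Type u} [AddCommGroup V] [Module k V] [AddCommGroup W] [Module k W]
  [AddCommGroup C] [Module k C]

/-- slice by a functional -/
noncomputable def sl (φ : C →ₗ[k] k) : V ⊗[k] C →ₗ[k] V :=
  (TensorProduct.rid k V).toLinearMap ∘ₗ φ.lTensor V

@[simp] lemma sl_tmul (φ : C →ₗ[k] k) (v : V) (c : C) : sl φ (v ⊗ₜ[k] c) = φ c • v := by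
  simp [sl]

lemma sl_rTensor (φ : C →ₗ[k] k) (f : V →ₗ[k] W) (x : V ⊗[k] C) :
    sl φ (f.rTensor C x) = f (sl φ x) := by
  induction x with
  | zero => simp
  | tmul v c => simp
  | add x y hx hy => simp [hx, hy]

lemma eq_zero_of_sl (x : V ⊗[k] C) (h : ∀ φ : C →ₗ[k] k, sl φ x = 0) : x = 0 := by
  classical
  let b := Module.Basis.ofVectorSpace k C
  apply (TensorProduct.equivFinsuppOfBasisRight (M := V) b).injective
  ext i
  have key : ∀ x : V ⊗[k] C, TensorProduct.equivFinsuppOfBasisRight (M := V) b x i =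
      sl (b.coord i) x := by
    intro x
    induction x with
    | zero => simp
    | tmul v c => simp
    | add x y hx hy => simp only [map_add, Finsupp.add_apply, hx, hy]
  rw [map_zero, Finsupp.zero_apply, key, h]

lemma mem_range_of_sl (U : Submodule k V) (x : V ⊗[k] C)
    (h : ∀ φ : C →ₗ[k] k, sl φ x ∈ U) : x ∈ LinearMap.range (U.subtype.rTensor C) := by
  have hex := rTensor_exact C (f := U.subtype) (g := U.mkQ)
    (by rw [LinearMap.exact_iff]; simp) (Submodule.mkQ_surjective U)
  rw [← LinearMap.exact_iff.mp hex, LinearMap.mem_ker]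
  apply eq_zero_of_sl
  intro φ
  rw [sl_rTensor]
  simpa using h φ

lemma sl_mem_of_range (U : Submodule k V) (x : V ⊗[k] C)
    (h : x ∈ LinearMap.range (U.subtype.rTensor C)) (φ : C →ₗ[k] k) : sl φ x ∈ U := by
  obtain ⟨y, rfl⟩ := h
  rw [sl_rTensor]
  exact (sl φ y).2

lemma exists_functional {U : Submodule k V} {v : V} (h : ∀ φ : V →ₗ[k] k, U ≤ LinearMap.ker φ → φ v = 0) :
    v ∈ U := by
  by_contra hv
  obtain ⟨f, hf, hU⟩ := Submodule.exists_le_ker_of_notMem hv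
  exact hf (h f hU)
end lin

section T
set_option linter.unusedSectionVars false
variable {k : Type u} [Field k]
variable {C : Type u} [AddCommGroup C] [Module k C] [Coalgebra k C]
variable {V W : Type u} [AddCommGroup V] [Module k V] [AddCommGroup W] [Module k W]

noncomputable def T (ρ : V →ₗ[k] V ⊗[k] C) (φ : C →ₗ[k] k) : V →ₗ[k] V := sl φ ∘ₗ ρ

lemma T_apply (ρ : V →ₗ[k] V ⊗[k] C) (φ : C →ₗ[k] k) (v : V) : T ρ φ v = sl φ (ρ v) := rfl

lemma isSubcomod_iff (ρ : V →ₗ[k] V ⊗[k] C) (U : Submodule k V) :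
    IsSubcomod k C ρ U ↔ ∀ φ, ∀ u ∈ U, T ρ φ u ∈ U :=
  ⟨fun h φ u hu => sl_mem_of_range U _ (h u hu) φ,
   fun h u hu => mem_range_of_sl U _ fun φ => h φ u hu⟩

lemma isComodHom_iff (ρV : V →ₗ[k] V ⊗[k] C) (ρW : W →ₗ[k] W ⊗[k] C) (f : V →ₗ[k] W) :
    IsComodHom k C ρV ρW f ↔ ∀ φ v, T ρW φ (f v) = f (T ρV φ v) := by
  constructor
  · intro h φ v
    have := LinearMap.congr_fun h v
    simp only [LinearMap.comp_apply] at this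
    rw [T_apply, this, sl_rTensor, T_apply]
  · intro h
    refine LinearMap.ext fun v => ?_
    rw [← sub_eq_zero]
    apply eq_zero_of_sl
    intro φ
    rw [map_sub, LinearMap.comp_apply, LinearMap.comp_apply, sl_rTensor, sub_eq_zero]
    exact h φ v

lemma exists_compl (hC : IsCosemisimple k C) (ρ : V →ₗ[k] V ⊗[k] C) (hρ : IsComod k C ρ)
    (U : Submodule k V) (hU : IsSubcomod k C ρ U) :
    ∃ U' : Submodule k V, IsSubcomod k C ρ U' ∧ IsCompl U U' := by
  obtain ⟨I, S, hS, -, htop⟩ := hC V ρ hρ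
  let R := Algebra.adjoin k (Set.range (T ρ))
  have key : ∀ X : Submodule k V, IsSubcomod k C ρ X → ∀ r : R, ∀ x ∈ X, r • x ∈ X := by
    intro X hX r
    rw [isSubcomod_iff] at hX
    obtain ⟨r, hr⟩ := r
    change ∀ x ∈ X, r x ∈ X
    refine Algebra.adjoin_induction (p := fun r _ => ∀ x ∈ X, r x ∈ X) ?_ ?_ ?_ ?_ hr
    · rintro _ ⟨φ, rfl⟩
      exact hX φ
    · intro c x hx
      exact X.smul_mem c hx
    · intro a b _ _ ha hb x hx
      exact X.add_mem (ha x hx) (hb x hx)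
    · intro a b _ _ ha hb x hx
      exact ha _ (hb x hx)
  let L : ∀ X : Submodule k V, IsSubcomod k C ρ X → Submodule R V := fun X hX =>
    { X with smul_mem' := fun r x hx => key X hX r x hx }
  have hL : ∀ X hX x, x ∈ L X hX ↔ x ∈ X := fun _ _ _ => Iff.rfl
  have hM : ∀ X : Submodule R V, IsSubcomod k C ρ (X.restrictScalars k) := by
    intro X
    rw [isSubcomod_iff]
    intro φ u hu
    exact X.smul_mem (⟨T ρ φ, Algebra.subset_adjoin ⟨φ, rfl⟩⟩ : R) hu
  have hat : ∀ i, IsAtom (L (S i) (hS i).1) := by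
    intro i
    refine ⟨fun h => (hS i).2.1 ?_, fun X hX => ?_⟩
    · rw [eq_bot_iff]
      intro x hx
      have : x ∈ L (S i) (hS i).1 := hx
      rw [h] at this
      simpa using this
    · rcases (hS i).2.2 (X.restrictScalars k) (fun x hx => hX.le hx) (hM X) with h | h
      · rw [eq_bot_iff]
        intro x hx
        have : x ∈ X.restrictScalars k := hx
        rw [h] at this
        simpa using this
      · exfalso
        refine hX.not_ge fun x hx => ?_
        have : x ∈ S i := hx
        rw [← h] at this
        exact this
  have hs : sSup {X : Submodule R V | IsAtom X} = ⊤ := by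
    rw [eq_top_iff]
    have : (⊤ : Submodule k V) ≤ (sSup {X : Submodule R V | IsAtom X}).restrictScalars k := by
      rw [← htop]
      refine iSup_le fun i x hx => ?_
      exact (le_sSup (hat i) : L (S i) (hS i).1 ≤ _) hx
    exact fun x _ => this trivial
  have := complementedLattice_of_sSup_atoms_eq_top hs
  obtain ⟨Y, hY⟩ := exists_isCompl (L U hU)
  refine ⟨Y.restrictScalars k, hM Y, ?_⟩
  constructor
  · rw [Submodule.disjoint_def]
    intro x hx hy
    exact (Submodule.disjoint_def.mp hY.disjoint) x hx hy
  · rw [codisjoint_iff, eq_top_iff]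
    intro x _
    have : x ∈ L U hU ⊔ Y := by rw [codisjoint_iff.mp hY.codisjoint]; trivial
    obtain ⟨a, ha, b, hb, rfl⟩ := Submodule.mem_sup.mp this
    exact Submodule.add_mem_sup ha hb

/-- colinear projection onto a subcomodule -/
lemma exists_proj (hC : IsCosemisimple k C) (ρ : V →ₗ[k] V ⊗[k] C) (hρ : IsComod k C ρ)
    (U : Submodule k V) (hU : IsSubcomod k C ρ U) :
    ∃ P : V →ₗ[k] V, (∀ φ v, T ρ φ (P v) = P (T ρ φ v)) ∧ (∀ v, P v ∈ U) ∧ (∀ v ∈ U, P v = v) := by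
  obtain ⟨U', hU', hc⟩ := exists_compl hC ρ hρ U hU
  rw [isSubcomod_iff] at hU hU'
  have h1 : ∀ v ∈ U, Submodule.projection U U' hc v = v := by
    intro v hv
    exact Submodule.projection_apply_left hc ⟨v, hv⟩
  have h2 : ∀ v ∈ U', Submodule.projection U U' hc v = 0 := by
    intro v hv
    exact (Submodule.projection_apply_eq_zero_iff hc).mpr hv
  refine ⟨Submodule.projection U U' hc, ?_, ?_, h1⟩
  · intro φ v
    have : v ∈ U ⊔ U' := by rw [codisjoint_iff.mp hc.codisjoint]; trivial
    obtain ⟨a, ha, b, hb, rfl⟩ := Submodule.mem_sup.mp this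
    simp only [map_add, h1 a ha, h2 b hb, h1 _ (hU φ a ha), h2 _ (hU' φ b hb), map_zero]
  · intro v
    have : v ∈ U ⊔ U' := by rw [codisjoint_iff.mp hc.codisjoint]; trivial
    obtain ⟨a, ha, b, hb, rfl⟩ := Submodule.mem_sup.mp this
    simpa only [map_add, h1 a ha, h2 b hb, add_zero] using ha

lemma exists_back (hC : IsCosemisimple k C) (ρV : V →ₗ[k] V ⊗[k] C) (hV : IsComod k C ρV)
    (ρW : W →ₗ[k] W ⊗[k] C) (hW : IsComod k C ρW) (f : V →ₗ[k] W) (hf0 : f ≠ 0)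
    (hf : IsComodHom k C ρV ρW f) :
    ∃ g : W →ₗ[k] V, g ≠ 0 ∧ IsComodHom k C ρW ρV g := by
  rw [isComodHom_iff] at hf
  obtain ⟨Q, hQ, hQr, hQi⟩ := exists_proj hC ρW hW (LinearMap.range f) (by
    rw [isSubcomod_iff]; rintro φ _ ⟨v, rfl⟩; exact ⟨_, (hf φ v).symm⟩)
  obtain ⟨P, hP, hPr, hPi⟩ := exists_proj hC ρV hV (LinearMap.ker f) (by
    rw [isSubcomod_iff]; intro φ v hv
    rw [LinearMap.mem_ker] at hv ⊢
    rw [← hf, hv, map_zero])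
  obtain ⟨s, hs⟩ := f.rangeRestrict.exists_rightInverse_of_surjective f.range_rangeRestrict
  have hs' : ∀ y : LinearMap.range f, f (s y) = y := fun y =>
    congrArg Subtype.val (LinearMap.congr_fun hs y)
  have hPk : ∀ x y, f x = f y → x - P x = y - P y := by
    intro x y hxy
    have := hPi (x - y) (by simp [hxy])
    rw [map_sub] at this
    rw [sub_eq_sub_iff_sub_eq_sub]
    exact this.symm
  refine ⟨(LinearMap.id - P) ∘ₗ s ∘ₗ Q.codRestrict _ hQr, ?_, ?_⟩
  · intro h
    apply hf0
    ext v
    have h1 := LinearMap.congr_fun h (f v)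
    simp only [LinearMap.comp_apply, LinearMap.sub_apply, LinearMap.id_apply,
      LinearMap.zero_apply] at h1
    rw [hPk _ v (by rw [hs']; exact hQi _ ⟨v, rfl⟩)] at h1
    have h2 : f (P v) = 0 := hPr v
    rw [LinearMap.zero_apply, ← sub_zero (f v), ← h2, ← map_sub, h1, map_zero, h2]
  · rw [isComodHom_iff]
    intro φ w
    simp only [LinearMap.comp_apply, LinearMap.sub_apply, LinearMap.id_apply]
    rw [map_sub, hP]
    apply hPk
    rw [← hf, hs', hs']
    exact hQ φ w

/-- restricted coaction -/
lemma exists_restrict (ρ : V →ₗ[k] V ⊗[k] C) (hρ : IsComod k C ρ)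
    (U : Submodule k V) (hU : IsSubcomod k C ρ U) :
    ∃ ρU : U →ₗ[k] U ⊗[k] C, IsComod k C ρU ∧ IsComodHom k C ρU ρ U.subtype := by
  have hinj : Function.Injective (U.subtype.rTensor C) :=
    Module.Flat.rTensor_preserves_injective_linearMap _ U.injective_subtype
  let E := LinearEquiv.ofInjective (U.subtype.rTensor C) hinj
  let ρU : U →ₗ[k] U ⊗[k] C := E.symm.toLinearMap ∘ₗ
    (ρ ∘ₗ U.subtype).codRestrict (LinearMap.range (U.subtype.rTensor C)) (fun u => hU u u.2)
  have h : ∀ u : U, U.subtype.rTensor C (ρU u) = ρ u := by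
    intro u
    have : E (ρU u) = _ := E.apply_symm_apply _
    exact congrArg Subtype.val this
  refine ⟨ρU, ⟨?_, ?_⟩, LinearMap.ext fun u => (h u).symm⟩
  · intro u
    have hinj2 : Function.Injective ((U.subtype.rTensor C).rTensor C) :=
      Module.Flat.rTensor_preserves_injective_linearMap _ hinj
    apply hinj2
    have h1 : ∀ z : U ⊗[k] C, (U.subtype.rTensor C).rTensor C (ρU.rTensor C z) =
        ρ.rTensor C (U.subtype.rTensor C z) := by
      intro z
      induction z with
      | zero => simp
      | tmul v c => simp only [LinearMap.rTensor_tmul, h]; rfl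
      | add x y hx hy => simp only [map_add, hx, hy]
    rw [h1, h, hρ.coassoc, ← h]
    generalize ρU u = z
    induction z with
    | zero => simp
    | tmul v c =>
      simp only [LinearMap.rTensor_tmul, LinearMap.lTensor_tmul]
      generalize (Coalgebra.comul (R := k) c) = d
      induction d with
      | zero => simp
      | tmul v c => simp
      | add x y hx hy => simp only [map_add, tmul_add, hx, hy]
    | add x y hx hy => simp only [map_add, hx, hy]
  · intro u
    apply U.injective_subtype
    change U.subtype (sl _ _) = _
    rw [← sl_rTensor, h]
    exact hρ.counit u

end T
end QG9
namespace QG9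
open QG
section Hpf
set_option linter.unusedSectionVars false
variable {k : Type u} [Field k]
variable {A H B : Type u} [Ring A] [HopfAlgebra k A] [Ring H] [HopfAlgebra k H]
    [Ring B] [HopfAlgebra k B]

lemma comul_isComod : IsComod k H (Coalgebra.comul (R := k) (A := H)) := by
  constructor
  · intro v
    rw [← Coalgebra.coassoc_apply]
    simp
  · intro v
    rw [Coalgebra.lTensor_counit_comul]
    simp

/-- left slice of comultiplication -/
noncomputable def Lf (η : H →ₗ[k] k) : H →ₗ[k] H :=
  (TensorProduct.lid k H).toLinearMap ∘ₗ η.rTensor H ∘ₗ Coalgebra.comul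

lemma Lf_apply (η : H →ₗ[k] k) (h : H) :
    Lf η h = TensorProduct.lid k H (η.rTensor H (Coalgebra.comul h)) := rfl

lemma counit_Lf (η : H →ₗ[k] k) (h : H) : Coalgebra.counit (R := k) (Lf η h) = η h := by
  have h1 : ∀ z : H ⊗[k] H, Coalgebra.counit (R := k) (TensorProduct.lid k H (η.rTensor H z)) =
      η (sl (Coalgebra.counit (R := k)) z) := by
    intro z
    induction z with
    | zero => simp
    | tmul x y => simp [mul_comm]
    | add x y hx hy => simp only [map_add, hx, hy]
  rw [Lf_apply, h1, sl]
  simp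

lemma counit_T (φ : H →ₗ[k] k) (h : H) :
    Coalgebra.counit (R := k) (T (Coalgebra.comul (R := k) (A := H)) φ h) = φ h := by
  have h1 : ∀ z : H ⊗[k] H, Coalgebra.counit (R := k) (sl φ z) =
      φ (TensorProduct.lid k H ((Coalgebra.counit (R := k)).rTensor H z)) := by
    intro z
    induction z with
    | zero => simp
    | tmul x y => simp [mul_comm]
    | add x y hx hy => simp only [map_add, hx, hy]
  rw [T_apply, h1]
  simp

lemma T_Lf (η φ : H →ₗ[k] k) (h : H) :
    T (Coalgebra.comul (R := k) (A := H)) φ (Lf η h) =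
      Lf η (T (Coalgebra.comul (R := k) (A := H)) φ h) := by
  let F : H ⊗[k] (H ⊗[k] H) →ₗ[k] H :=
    (TensorProduct.lid k H).toLinearMap ∘ₗ TensorProduct.map η (sl φ)
  have h1 : ∀ z : H ⊗[k] H,
      T (Coalgebra.comul (R := k) (A := H)) φ (TensorProduct.lid k H (η.rTensor H z)) =
      F (Coalgebra.comul.lTensor H z) := by
    intro z
    induction z with
    | zero => simp
    | tmul x y => simp [F, T_apply]
    | add x y hx hy => simp only [map_add, hx, hy]
  have h2 : ∀ z : H ⊗[k] H, Lf η (sl φ z) =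
      F (TensorProduct.assoc k H H H (Coalgebra.comul.rTensor H z)) := by
    intro z
    induction z with
    | zero => simp
    | tmul x y =>
      simp only [sl_tmul, map_smul, Lf_apply, LinearMap.rTensor_tmul]
      generalize (Coalgebra.comul (R := k) x) = d
      induction d with
      | zero => simp
      | tmul v c => simp [F, smul_smul, mul_comm]
      | add x y hx hy => simp only [map_add, add_tmul, smul_add, hx, hy]
    | add x y hx hy => simp only [map_add, hx, hy]
  rw [Lf_apply, h1, T_apply, h2, Coalgebra.coassoc_apply]

lemma mem_mul_range (ι : A →ₐc[k] H) (G F : A →ₗ[k] H)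
    (hG : ∀ a, G a ∈ LinearMap.range (ι : A →ₗ[k] H))
    (hF : ∀ a, F a ∈ LinearMap.range (ι : A →ₗ[k] H)) (z : A ⊗[k] A) :
    LinearMap.mul' k H (TensorProduct.map G F z) ∈ LinearMap.range (ι : A →ₗ[k] H) := by
  induction z with
  | zero => simp
  | tmul x y =>
    obtain ⟨a, ha⟩ := hG x
    obtain ⟨b, hb⟩ := hF y
    refine ⟨a * b, ?_⟩
    rw [TensorProduct.map_tmul, LinearMap.mul'_apply, ← ha, ← hb]
    exact map_mul ι a b
  | add x y hx hy => simpa only [map_add] using Submodule.add_mem _ hx hy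

lemma exists_e (ι : A →ₐc[k] H) (hcssH : IsCosemisimple k H) :
    ∃ e : H →ₗ[k] k, e 1 = 1 ∧ (∀ h, Lf e h ∈ LinearMap.range (ι : A →ₗ[k] H)) ∧
      ∀ g : H, ∀ a : A, Coalgebra.counit (R := k) a = 0 → e (g * ι a) = 0 := by
  have hcι : ∀ a : A, Coalgebra.comul (R := k) (ι a) =
      TensorProduct.map (ι : A →ₗ[k] H) (ι : A →ₗ[k] H) (Coalgebra.comul a) := fun a =>
    (CoalgHomClass.map_comp_comul_apply ι a).symm
  have hει : ∀ a : A, Coalgebra.counit (R := k) (ι a) = Coalgebra.counit (R := k) a := fun a =>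
    CoalgHomClass.counit_comp_apply ι a
  have hTA : ∀ φ : H →ₗ[k] k, ∀ a : A, ∃ b : A,
      T (Coalgebra.comul (R := k) (A := H)) φ (ι a) = ι b ∧
      (LinearMap.range (ι : A →ₗ[k] H) ≤ LinearMap.ker φ → b = 0) := by
    intro φ a
    rw [T_apply, hcι]
    generalize (Coalgebra.comul (R := k) a) = z
    induction z with
    | zero => exact ⟨0, by simp, fun _ => rfl⟩
    | tmul x y =>
      refine ⟨φ (ι y) • x, by simp, fun h => ?_⟩
      have : φ (ι y) = 0 := h ⟨y, rfl⟩
      rw [this, zero_smul]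
    | add x y hx hy =>
      obtain ⟨b, hb, hb'⟩ := hx
      obtain ⟨c, hc, hc'⟩ := hy
      exact ⟨b + c, by rw [map_add, map_add, hb, hc, map_add], fun h => by rw [hb' h, hc' h, add_zero]⟩
  obtain ⟨P, hP, hPr, hPi⟩ := exists_proj hcssH _ comul_isComod
    (LinearMap.range (ι : A →ₗ[k] H)) (by
      rw [isSubcomod_iff]
      rintro φ _ ⟨a, rfl⟩
      obtain ⟨b, hb, -⟩ := hTA φ a
      exact ⟨b, hb.symm⟩)
  have hPι : ∀ a, P (ι a) = ι a := fun a => hPi _ ⟨a, rfl⟩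
  have kill : ∀ q : H →ₗ[k] H, (∀ φ v, T (Coalgebra.comul (R := k) (A := H)) φ (q v) =
      q (T (Coalgebra.comul (R := k) (A := H)) φ v)) →
      (∀ h, q h ∈ LinearMap.range (ι : A →ₗ[k] H)) → ∀ c, P c = 0 → q c = 0 := by
    intro q hq hqr c hc
    obtain ⟨Q, hQ, hQr, hQi⟩ := exists_proj hcssH _ comul_isComod
      (LinearMap.ker P ⊓ LinearMap.ker q) (by
        rw [isSubcomod_iff]
        rintro φ u ⟨h1, h2⟩
        rw [SetLike.mem_coe, LinearMap.mem_ker] at h1 h2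
        constructor
        · rw [SetLike.mem_coe, LinearMap.mem_ker, ← hP, h1, map_zero]
        · rw [SetLike.mem_coe, LinearMap.mem_ker, ← hq, h2, map_zero])
    have hu : c - Q c ∈ LinearMap.range (ι : A →ₗ[k] H) := by
      apply exists_functional
      intro φ hφ
      have h0 : T (Coalgebra.comul (R := k) (A := H)) φ (c - Q c) = 0 := by
        rw [← hQi (T (Coalgebra.comul (R := k) (A := H)) φ (c - Q c)), ← hQ, map_sub,
          hQi (Q c) (hQr c), sub_self, map_zero]
        constructor
        · have : P (Q c) = 0 := (hQr c).1
          rw [SetLike.mem_coe, LinearMap.mem_ker, ← hP, map_sub, hc, this, sub_zero, map_zero]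
        · rw [SetLike.mem_coe, LinearMap.mem_ker, ← hq]
          obtain ⟨a, ha⟩ := hqr (c - Q c)
          obtain ⟨b, hb, hb'⟩ := hTA φ a
          rw [← ha]
          refine hb.trans ?_
          rw [hb' hφ, map_zero]
      rw [← counit_T, h0, map_zero]
    have h1 : P (Q c) = 0 := (hQr c).1
    have h2 : q (Q c) = 0 := (hQr c).2
    have h3 := hPi _ hu
    rw [map_sub, hc, h1, sub_zero] at h3
    rw [← sub_zero (q c), ← h2, ← map_sub, ← h3, map_zero, h2]
  let e : H →ₗ[k] k := Coalgebra.counit ∘ₗ P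
  have he : ∀ h, Lf e h = P h := by
    intro h
    have h1 := LinearMap.congr_fun ((isComodHom_iff _ _ P).mpr hP) h
    simp only [LinearMap.comp_apply] at h1
    have h2 := congrArg (fun z => TensorProduct.lid k H ((Coalgebra.counit (R := k)).rTensor H z)) h1
    simp only [Coalgebra.rTensor_counit_comul, ← LinearMap.rTensor_comp_apply] at h2
    rw [Lf_apply]
    simpa using h2.symm
  let Φ : H ⊗[k] H →ₗ[k] (A →ₗ[k] H) := TensorProduct.lift (LinearMap.mk₂ k
    (fun x y => (LinearMap.toSpanSingleton k H y) ∘ₗ e ∘ₗ LinearMap.mulLeft k x ∘ₗ (ι : A →ₗ[k] H))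
    (by intros; ext; simp [add_mul, add_smul]) (by intros; ext; simp [smul_smul])
    (by intros; ext; simp) (by intros; ext; simp [smul_smul, mul_comm]))
  have hΦ : ∀ x y a, Φ (x ⊗ₜ y) a = e (x * ι a) • y := by intros; simp [Φ]
  have hΦq : ∀ h a, Φ (Coalgebra.comul h) a = Lf (e ∘ₗ LinearMap.mulRight k (ι a)) h := by
    intro h a
    rw [Lf_apply]
    generalize (Coalgebra.comul (R := k) h) = z
    induction z with
    | zero => simp
    | tmul x y => rw [hΦ]; simp
    | add x y hx hy => simp only [map_add, LinearMap.add_apply, hx, hy]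
  have hrange : ∀ h a, Lf (e ∘ₗ LinearMap.mulRight k (ι a)) h ∈ LinearMap.range (ι : A →ₗ[k] H) := by
    intro h a
    rw [← hΦq]
    let G : A →ₗ[k] H := P ∘ₗ LinearMap.mulLeft k h ∘ₗ (ι : A →ₗ[k] H)
    let S : A →ₗ[k] H := (ι : A →ₗ[k] H) ∘ₗ HopfAlgebra.antipode k
    have c1 : WithConv.toConv (Φ (Coalgebra.comul h)) * WithConv.toConv (ι : A →ₗ[k] H)
        = WithConv.toConv G := by
      apply WithConv.ext
      ext a
      rw [LinearMap.convMul_def]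
      change LinearMap.mul' k H (TensorProduct.map (Φ (Coalgebra.comul h)) (ι : A →ₗ[k] H)
        (Coalgebra.comul a)) = P (h * ι a)
      rw [← he, Lf_apply, Bialgebra.comul_mul, hcι]
      generalize (Coalgebra.comul (R := k) a) = z
      generalize (Coalgebra.comul (R := k) h) = w
      induction z with
      | zero => simp
      | tmul a b =>
        induction w with
        | zero => simp
        | tmul x y => 
          rw [TensorProduct.map_tmul, LinearMap.mul'_apply, hΦ]
          simp
        | add x y hx hy =>
          simp only [map_add, add_mul, TensorProduct.map_add_left, LinearMap.add_apply, hx, hy]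
      | add x y hx hy => simp only [map_add, mul_add, hx, hy]
    have c2 : WithConv.toConv (ι : A →ₗ[k] H) * WithConv.toConv S = 1 := by
      apply WithConv.ext
      ext a
      rw [LinearMap.convMul_def]
      change LinearMap.mul' k H (TensorProduct.map (ι : A →ₗ[k] H) S
        (Coalgebra.comul a)) = algebraMap k H (Coalgebra.counit a)
      have : ∀ z : A ⊗[k] A, LinearMap.mul' k H (TensorProduct.map (ι : A →ₗ[k] H) S z) =
          ι (LinearMap.mul' k A ((HopfAlgebra.antipode k).lTensor A z)) := by
        intro z
        induction z with
        | zero => simp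
        | tmul x y => simp [S]
        | add x y hx hy => simp only [map_add, hx, hy]
      rw [this, HopfAlgebra.mul_antipode_lTensor_comul_apply]
      exact AlgHomClass.commutes ι _
    have c3 : WithConv.toConv (Φ (Coalgebra.comul h)) = WithConv.toConv G * WithConv.toConv S := by
      rw [← c1, mul_assoc, c2, mul_one]
    have c4 : Φ (Coalgebra.comul h) a =
        LinearMap.mul' k H (TensorProduct.map G S (Coalgebra.comul a)) := by
      have := congrArg WithConv.ofConv c3
      exact LinearMap.congr_fun this a
    rw [c4]
    exact mem_mul_range ι G S (fun a => hPr _) (fun a => ⟨_, rfl⟩) _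
  refine ⟨e, ?_, ?_, ?_⟩
  · change Coalgebra.counit (R := k) (P 1) = 1
    rw [← map_one ι, hPι, map_one]; simp
  · intro h
    rw [he]; exact hPr h
  · intro g a ha
    have h1 : e ((g - P g) * ι a) = 0 := by
      have := kill (Lf (e ∘ₗ LinearMap.mulRight k (ι a))) (fun φ v => T_Lf _ _ _)
        (fun h => hrange h a) (g - P g) (by rw [map_sub, hPi (P g) (hPr g), sub_self])
      have h2 := counit_Lf (e ∘ₗ LinearMap.mulRight k (ι a)) (g - P g)
      rw [this, map_zero] at h2
      exact h2.symm
    have h2 : e (P g * ι a) = 0 := by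
      obtain ⟨b, hb⟩ := hPr g
      have hb' : ι b = P g := hb
      rw [← hb', ← map_mul]
      change Coalgebra.counit (R := k) (P _) = 0
      rw [hPι, hει, Bialgebra.counit_mul, ha, mul_zero]
    rw [sub_mul, map_sub, h2, sub_zero] at h1
    exact h1

lemma left_coinv_mem (ι : A →ₐc[k] H) (π : H →ₐc[k] B) (hsurj : Function.Surjective π)
    (hexactB : LinearMap.ker (π : H →ₗ[k] B) =
      leftIdealGen k (LinearMap.range (ι : A →ₗ[k] H) ⊓
        LinearMap.ker (Coalgebra.counit (R := k) (A := H))))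
    (hcssH : IsCosemisimple k H) (h : H)
    (hh : (π : H →ₗ[k] B).rTensor H (Coalgebra.comul h) = 1 ⊗ₜ h) :
    h ∈ LinearMap.range (ι : A →ₗ[k] H) := by
  obtain ⟨e, he1, heA, he0⟩ := exists_e ι hcssH
  have hker : LinearMap.ker (π : H →ₗ[k] B) ≤ LinearMap.ker e := by
    rw [hexactB, leftIdealGen, Submodule.span_le]
    rintro _ ⟨g, _, ⟨⟨a, rfl⟩, ha⟩, rfl⟩
    refine he0 g a ?_
    rw [← ha]
    exact (CoalgHomClass.counit_comp_apply ι a).symm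
  obtain ⟨s, hs⟩ := (π : H →ₗ[k] B).exists_rightInverse_of_surjective
    (LinearMap.range_eq_top.mpr hsurj)
  have hs' : ∀ b, (π : H →ₗ[k] B) (s b) = b := fun b => LinearMap.congr_fun hs b
  have hes : (e ∘ₗ s) ∘ₗ (π : H →ₗ[k] B) = e := by
    ext x
    have : s ((π : H →ₗ[k] B) x) - x ∈ LinearMap.ker e := hker (by
      rw [LinearMap.mem_ker, map_sub, hs', sub_self])
    rw [LinearMap.mem_ker, map_sub, sub_eq_zero] at this
    exact this
  have h1 : Lf e h = h := by
    rw [Lf_apply, ← hes, LinearMap.rTensor_comp_apply, hh]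
    have : e (s 1) = 1 := by
      have := LinearMap.congr_fun hes 1
      rw [he1] at this
      rw [← this]
      simp
    simp [this]
  rw [← h1]
  exact heA h

end Hpf
end QG9
namespace QG9
open QG
section Th
set_option linter.unusedSectionVars false
variable {k : Type u} [Field k]
variable {A H B : Type u} [Ring A] [HopfAlgebra k A] [Ring H] [HopfAlgebra k H]
    [Ring B] [HopfAlgebra k B]
variable {V W : Type u} [AddCommGroup V] [Module k V] [AddCommGroup W] [Module k W]
variable {M : Type u} [Ring M] [Algebra k M]

lemma comm_lr {X Y : Type u} [AddCommGroup X] [Module k X] [AddCommGroup Y] [Module k Y]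
    (f : V →ₗ[k] W) (g : X →ₗ[k] Y) (z : V ⊗[k] X) :
    f.rTensor Y (g.lTensor V z) = g.lTensor W (f.rTensor X z) := by
  induction z with
  | zero => simp
  | tmul x y => simp
  | add x y hx hy => simp only [map_add, hx, hy]

lemma cores_isComod (π : H →ₐc[k] B) (ρ : V →ₗ[k] V ⊗[k] H) (hρ : IsComod k H ρ) :
    IsComod k B (cores k H (π : H →ₗ[k] B) ρ) := by
  have hcπ : ∀ a : H, Coalgebra.comul (R := k) ((π : H →ₗ[k] B) a) =
      TensorProduct.map (π : H →ₗ[k] B) (π : H →ₗ[k] B) (Coalgebra.comul a) := fun a =>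
    (CoalgHomClass.map_comp_comul_apply π a).symm
  have hεπ : ∀ a : H, Coalgebra.counit (R := k) ((π : H →ₗ[k] B) a) =
      Coalgebra.counit (R := k) a := fun a =>
    CoalgHomClass.counit_comp_apply π a
  have hc : ∀ v, cores k H (π : H →ₗ[k] B) ρ v = (π : H →ₗ[k] B).lTensor V (ρ v) := fun _ => rfl
  constructor
  · intro v
    have h1 : ∀ z : V ⊗[k] H, (cores k H (π : H →ₗ[k] B) ρ).rTensor B
        ((π : H →ₗ[k] B).lTensor V z) =
        TensorProduct.map ((π : H →ₗ[k] B).lTensor V) (π : H →ₗ[k] B) (ρ.rTensor H z) := by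
      intro z
      induction z with
      | zero => simp
      | tmul x y => simp only [LinearMap.lTensor_tmul, LinearMap.rTensor_tmul, TensorProduct.map_tmul, hc]
      | add x y hx hy => simp only [map_add, hx, hy]
    rw [hc, h1, hρ.coassoc]
    generalize ρ v = z
    induction z with
    | zero => simp
    | tmul x y =>
      simp only [LinearMap.lTensor_tmul, hcπ]
      generalize (Coalgebra.comul (R := k) y) = d
      induction d with
      | zero => simp
      | tmul v c => simp
      | add x y hx hy => simp only [map_add, tmul_add, hx, hy]
    | add x y hx hy => simp only [map_add, hx, hy]
  · intro v
    rw [hc, ← LinearMap.lTensor_comp_apply]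
    have : (Coalgebra.counit (R := k) (A := B)) ∘ₗ (π : H →ₗ[k] B) = Coalgebra.counit :=
      LinearMap.ext hεπ
    rw [this]
    exact hρ.counit v

lemma T_cores (π : H →ₗ[k] B) (ρ : V →ₗ[k] V ⊗[k] H) (φ : B →ₗ[k] k) :
    T (cores k H π ρ) φ = T ρ (φ ∘ₗ π) := by
  ext v
  rw [T_apply, T_apply, sl, sl, cores]
  simp only [LinearMap.comp_apply, LinearMap.lTensor_comp_apply]

lemma isComodHom_cores (π : H →ₐc[k] B) (ρ : V →ₗ[k] V ⊗[k] H) (ρ' : W →ₗ[k] W ⊗[k] H)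
    (f : V →ₗ[k] W) : IsComodHom k B (cores k H (π : H →ₗ[k] B) ρ)
          (cores k H (π : H →ₗ[k] B) ρ') f ↔
    ∀ (φ : B →ₗ[k] k) v, T ρ' (φ ∘ₗ (π : H →ₗ[k] B)) (f v) =
      f (T ρ (φ ∘ₗ (π : H →ₗ[k] B)) v) := by
  rw [isComodHom_iff]
  simp only [T_cores]

/-- `w ⊗ m ↦ w₀ ⊗ s(w₁) m` -/
noncomputable def Th (ρ : W →ₗ[k] W ⊗[k] H) (s : H →ₗ[k] M) : W ⊗[k] M →ₗ[k] W ⊗[k] M :=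
  (LinearMap.mul' k M ∘ₗ s.rTensor M).lTensor W ∘ₗ
    (TensorProduct.assoc k W H M).toLinearMap ∘ₗ ρ.rTensor M

lemma Th_tmul (ρ : W →ₗ[k] W ⊗[k] H) (s : H →ₗ[k] M) (w : W) (m : M) :
    Th ρ s (w ⊗ₜ m) = (LinearMap.mulRight k m ∘ₗ s).lTensor W (ρ w) := by
  simp only [Th, LinearMap.comp_apply, LinearMap.rTensor_tmul]
  generalize ρ w = z
  induction z with
  | zero => simp
  | tmul x y => simp
  | add x y hx hy => simp only [map_add, add_tmul, hx, hy]

lemma assoc_coassoc {ρ : W →ₗ[k] W ⊗[k] H} (hρ : IsComod k H ρ) (w : W) :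
    TensorProduct.assoc k W H H (ρ.rTensor H (ρ w)) = Coalgebra.comul.lTensor W (ρ w) := by
  rw [hρ.coassoc]; simp

lemma Th_comp {ρ : W →ₗ[k] W ⊗[k] H} (hρ : IsComod k H ρ) (s t : H →ₗ[k] M) (x : W ⊗[k] M) :
    Th ρ s (Th ρ t x) = Th ρ (LinearMap.mul' k M ∘ₗ TensorProduct.map s t ∘ₗ Coalgebra.comul) x := by
  induction x with
  | zero => simp
  | tmul w m =>
    rw [Th_tmul, Th_tmul]
    have h1 : ∀ z : W ⊗[k] H, Th ρ s ((LinearMap.mulRight k m ∘ₗ t).lTensor W z) =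
        (LinearMap.mulRight k m ∘ₗ LinearMap.mul' k M ∘ₗ TensorProduct.map s t).lTensor W
        (TensorProduct.assoc k W H H (ρ.rTensor H z)) := by
      intro z
      induction z with
      | zero => simp
      | tmul x y =>
        rw [LinearMap.lTensor_tmul, Th_tmul, LinearMap.rTensor_tmul]
        generalize ρ x = z
        induction z with
        | zero => simp
        | tmul x y => simp [mul_assoc]
        | add x y hx hy => simp only [map_add, add_tmul, hx, hy]
      | add x y hx hy => simp only [map_add, hx, hy]
    rw [h1, assoc_coassoc hρ, ← LinearMap.lTensor_comp_apply]
    rfl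
  | add x y hx hy => simp only [map_add, hx, hy]

lemma Th_one {ρ : W →ₗ[k] W ⊗[k] H} (hρ : IsComod k H ρ) (x : W ⊗[k] M) :
    Th ρ (Algebra.linearMap k M ∘ₗ Coalgebra.counit) x = x := by
  induction x with
  | zero => simp
  | tmul w m =>
    rw [Th_tmul]
    conv_rhs => rw [← hρ.counit w]
    generalize ρ w = z
    induction z with
    | zero => simp
    | tmul x y => simp [← Algebra.smul_def, TensorProduct.smul_tmul]
    | add x y hx hy => simp only [map_add, add_tmul, hx, hy]
  | add x y hx hy => simp only [map_add, hx, hy]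

lemma Th_left {ρ : W →ₗ[k] W ⊗[k] H} (hρ : IsComod k H ρ) (κ : H →ₐ[k] M) (x : W ⊗[k] M) :
    Th ρ (κ.toLinearMap ∘ₗ HopfAlgebra.antipode k) (Th ρ κ.toLinearMap x) = x := by
  rw [Th_comp hρ]
  conv_rhs => rw [← Th_one hρ x]
  congr 2
  ext h
  have h1 : ∀ z : H ⊗[k] H, LinearMap.mul' k M (TensorProduct.map (κ.toLinearMap ∘ₗ HopfAlgebra.antipode k) κ.toLinearMap z) =
      κ (LinearMap.mul' k H ((HopfAlgebra.antipode k).rTensor H z)) := by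
    intro z
    induction z with
    | zero => simp
    | tmul x y => simp
    | add x y hx hy => simp only [map_add, hx, hy]
  simp only [LinearMap.comp_apply, h1, HopfAlgebra.mul_antipode_rTensor_comul_apply]
  simp

lemma Th_right {ρ : W →ₗ[k] W ⊗[k] H} (hρ : IsComod k H ρ) (κ : H →ₐ[k] M) (x : W ⊗[k] M) :
    Th ρ κ.toLinearMap (Th ρ (κ.toLinearMap ∘ₗ HopfAlgebra.antipode k) x) = x := by
  rw [Th_comp hρ]
  conv_rhs => rw [← Th_one hρ x]
  congr 2
  ext h
  have h1 : ∀ z : H ⊗[k] H, LinearMap.mul' k M (TensorProduct.map κ.toLinearMap (κ.toLinearMap ∘ₗ HopfAlgebra.antipode k) z) =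
      κ (LinearMap.mul' k H ((HopfAlgebra.antipode k).lTensor H z)) := by
    intro z
    induction z with
    | zero => simp
    | tmul x y => simp
    | add x y hx hy => simp only [map_add, hx, hy]
  simp only [LinearMap.comp_apply, h1, HopfAlgebra.mul_antipode_lTensor_comul_apply]
  simp

/-- naturality -/
lemma Th_nat (ρ : W →ₗ[k] W ⊗[k] H) (κ : H →ₐ[k] M) (x : W ⊗[k] H) :
    κ.toLinearMap.lTensor W (Th ρ (AlgHom.id k H).toLinearMap x) =
      Th ρ κ.toLinearMap (κ.toLinearMap.lTensor W x) := by
  induction x with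
  | zero => simp
  | tmul w h =>
    rw [Th_tmul, LinearMap.lTensor_tmul, Th_tmul, ← LinearMap.lTensor_comp_apply]
    congr 2
    ext y
    simp
  | add x y hx hy => simp only [map_add, hx, hy]

lemma T_tensor_tmul (ρ : W →ₗ[k] W ⊗[k] H) (φ : H →ₗ[k] k) (w : W) (h : H) :
    T (tensorCoact k H ρ (Coalgebra.comul (R := k) (A := H))) φ (w ⊗ₜ h) =
      sl φ ((LinearMap.mul' k H).lTensor (W ⊗[k] H)
        (TensorProduct.tensorTensorTensorComm k W H H H (ρ w ⊗ₜ Coalgebra.comul h))) := by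
  simp [T_apply, tensorCoact]

/-- the free coaction on `W ⊗ H` -/
lemma Th_colinear {ρ : W →ₗ[k] W ⊗[k] H} (hρ : IsComod k H ρ) (φ : H →ₗ[k] k) (x : W ⊗[k] H) :
    Th ρ (AlgHom.id k H).toLinearMap
      (T (tensorCoact k H ρ (Coalgebra.comul (R := k) (A := H))) φ x) =
    (T (Coalgebra.comul (R := k) (A := H)) φ).lTensor W (Th ρ (AlgHom.id k H).toLinearMap x) := by
  induction x with
  | zero => simp
  | tmul w h =>
    rw [T_tensor_tmul, Th_tmul, ← LinearMap.lTensor_comp_apply]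
    have h1 : ∀ t : H ⊗[k] H, Th ρ (AlgHom.id k H).toLinearMap
        (sl φ ((LinearMap.mul' k H).lTensor (W ⊗[k] H)
        (TensorProduct.tensorTensorTensorComm k W H H H (ρ w ⊗ₜ t)))) =
        (sl φ ∘ₗ LinearMap.mulRight k t).lTensor W
          (TensorProduct.assoc k W H H (ρ.rTensor H (ρ w))) := by
      intro t
      induction t with
      | zero => simp
      | tmul a b =>
        generalize ρ w = z
        induction z with
        | zero => simp
        | tmul x y =>
          simp only [TensorProduct.tensorTensorTensorComm_tmul, LinearMap.lTensor_tmul,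
            LinearMap.mul'_apply, sl_tmul, map_smul, Th_tmul, LinearMap.rTensor_tmul]
          generalize ρ x = z
          induction z with
          | zero => simp
          | tmul x y => simp [TensorProduct.tmul_smul]
          | add x y hx hy => simp only [map_add, add_tmul, smul_add, hx, hy]
        | add x y hx hy => simp only [map_add, add_tmul, hx, hy]
      | add x y hx hy =>
        simp only [map_add, tmul_add, hx, hy]
        rw [← LinearMap.add_apply, ← LinearMap.lTensor_add]
        congr 2
        ext; simp [mul_add]
    rw [h1, assoc_coassoc hρ, ← LinearMap.lTensor_comp_apply]
    congr 2
    ext y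
    simp [T_apply]
  | add x y hx hy => simp only [map_add, hx, hy]

/-- (1) → (3), construction -/
lemma exists_embed (ι : A →ₐc[k] H) (π : H →ₐc[k] B) (hsurj : Function.Surjective π)
    (hexactB : LinearMap.ker (π : H →ₗ[k] B) =
      leftIdealGen k (LinearMap.range (ι : A →ₗ[k] H) ⊓
        LinearMap.ker (Coalgebra.counit (R := k) (A := H))))
    (hcssH : IsCosemisimple k H)
    (ρV : V →ₗ[k] V ⊗[k] H) (hV : IsComod k H ρV) (hVs : IsSimpleComod k H ρV)
    (ρW : W →ₗ[k] W ⊗[k] H) (hW : IsComod k H ρW) (f : V →ₗ[k] W) (hf0 : f ≠ 0)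
    (hf : IsComodHom k B (cores k H (π : H →ₗ[k] B) ρV)
          (cores k H (π : H →ₗ[k] B) ρW) f) :
    ∃ g : V →ₗ[k] W ⊗[k] H, Function.Injective g ∧
          IsComodHom k H ρV
            (tensorCoact k H ρW (Coalgebra.comul (R := k) (A := H))) g ∧
          ∀ v, g v ∈ LinearMap.range
            ((LinearMap.range (ι : A →ₗ[k] H)).subtype.lTensor W) := by
  let S : W ⊗[k] H →ₗ[k] W ⊗[k] H :=
    Th ρW ((AlgHom.id k H).toLinearMap ∘ₗ HopfAlgebra.antipode k)
  let g : V →ₗ[k] W ⊗[k] H := S ∘ₗ f.rTensor H ∘ₗ ρV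
  have hg : ∀ v, Th ρW (AlgHom.id k H).toLinearMap (g v) = f.rTensor H (ρV v) := fun v =>
    Th_right hW (AlgHom.id k H) _
  have hinjTh : Function.Injective (Th ρW (AlgHom.id k H).toLinearMap) :=
    Function.LeftInverse.injective (Th_left hW (AlgHom.id k H))
  have hgc : ∀ φ v, T (tensorCoact k H ρW (Coalgebra.comul (R := k) (A := H))) φ (g v) =
      g (T ρV φ v) := by
    intro φ v
    apply hinjTh
    rw [Th_colinear hW, hg, hg, T_apply]
    have h1 : ∀ z : V ⊗[k] H, f.rTensor H (ρV (sl φ z)) =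
        (f.rTensor H) ((sl φ).lTensor V (TensorProduct.assoc k V H H (ρV.rTensor H z))) := by
      intro z
      induction z with
      | zero => simp
      | tmul x y =>
        rw [LinearMap.rTensor_tmul, sl_tmul, map_smul]
        generalize ρV x = z
        induction z with
        | zero => simp
        | tmul x y => simp
        | add x y hx hy => simp only [map_add, add_tmul, smul_add, hx, hy]
      | add x y hx hy => simp only [map_add, hx, hy]
    rw [h1, assoc_coassoc hV, ← LinearMap.lTensor_comp_apply]
    exact (comm_lr f (T (Coalgebra.comul (R := k) (A := H)) φ) (ρV v)).symm
  have hg0 : g ≠ 0 := by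
    intro h
    apply hf0
    ext v
    have h1 := hg v
    rw [h] at h1
    simp only [LinearMap.zero_apply, map_zero] at h1
    have h2 := sl_rTensor (Coalgebra.counit (R := k)) f (ρV v)
    rw [← h1, map_zero] at h2
    rw [show sl (Coalgebra.counit (R := k)) (ρV v) = v from hV.counit v] at h2
    simpa using h2.symm
  refine ⟨g, ?_, (isComodHom_iff _ _ _).mpr hgc, ?_⟩
  · rcases hVs.2.2 (LinearMap.ker g) le_top (by
      rw [isSubcomod_iff]
      intro φ u hu
      rw [LinearMap.mem_ker] at hu ⊢
      rw [← hgc, hu, map_zero]) with h | h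
    · exact LinearMap.ker_eq_bot.mp h
    · exact absurd (LinearMap.ker_eq_top.mp h) hg0
  · intro v
    let κ : H →ₐ[k] B ⊗[k] H :=
      (Algebra.TensorProduct.map (π : H →ₐ[k] B) (AlgHom.id k H)).comp (Bialgebra.comulAlgHom k H)
    have hκ : κ.toLinearMap = (π : H →ₗ[k] B).rTensor H ∘ₗ Coalgebra.comul := by
      ext h; rfl
    let j : H →ₗ[k] B ⊗[k] H := TensorProduct.mk k B H 1
    let μ : W ⊗[k] H →ₗ[k] W ⊗[k] (B ⊗[k] H) :=
      (TensorProduct.assoc k W B H).toLinearMap ∘ₗ (cores k H (π : H →ₗ[k] B) ρW).rTensor H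
    have hμ : ∀ x, μ (Th ρW (AlgHom.id k H).toLinearMap x) =
        Th ρW κ.toLinearMap (j.lTensor W x) := by
      intro x
      induction x with
      | zero => simp
      | tmul w h =>
        rw [Th_tmul, LinearMap.lTensor_tmul, Th_tmul]
        have h1 : ∀ z : W ⊗[k] H,
            μ ((LinearMap.mulRight k h ∘ₗ (AlgHom.id k H).toLinearMap).lTensor W z) =
            (LinearMap.mulRight k (j h) ∘ₗ (π : H →ₗ[k] B).rTensor H).lTensor W
              (TensorProduct.assoc k W H H (ρW.rTensor H z)) := by
          intro z
          induction z with
          | zero => simp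
          | tmul x y =>
            simp only [μ, LinearMap.comp_apply, LinearMap.rTensor_tmul, LinearMap.lTensor_tmul, cores]
            generalize ρW x = z
            induction z with
            | zero => simp
            | tmul x y => simp [j]
            | add x y hx hy => simp only [map_add, add_tmul, hx, hy]
          | add x y hx hy => simp only [map_add, hx, hy]
        rw [h1, assoc_coassoc hW, ← LinearMap.lTensor_comp_apply, hκ]
        rfl
      | add x y hx hy => simp only [map_add, hx, hy]
    have hμy : μ (f.rTensor H (ρV v)) = κ.toLinearMap.lTensor W (f.rTensor H (ρV v)) := by
      have h0 : ∀ x, cores k H (π : H →ₗ[k] B) ρW (f x) =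
          f.rTensor B ((π : H →ₗ[k] B).lTensor V (ρV x)) := fun x => LinearMap.congr_fun hf x
      have h1 : ∀ z : V ⊗[k] H, μ (f.rTensor H z) = (f.rTensor (B ⊗[k] H))
          (((π : H →ₗ[k] B).rTensor H).lTensor V
            (TensorProduct.assoc k V H H (ρV.rTensor H z))) := by
        intro z
        induction z with
        | zero => simp
        | tmul x y =>
          simp only [μ, LinearMap.comp_apply, LinearMap.rTensor_tmul, h0]
          generalize ρV x = z
          induction z with
          | zero => simp
          | tmul x y => simp
          | add x y hx hy => simp only [map_add, add_tmul, hx, hy]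
        | add x y hx hy => simp only [map_add, hx, hy]
      rw [h1, assoc_coassoc hV, ← LinearMap.lTensor_comp_apply, ← hκ]
      exact comm_lr f κ.toLinearMap (ρV v)
    have hx : (κ.toLinearMap - j).lTensor W (g v) = 0 := by
      have hinj : Function.Injective (Th ρW κ.toLinearMap) :=
        Function.LeftInverse.injective (Th_left hW κ)
      apply hinj
      rw [LinearMap.lTensor_sub, LinearMap.sub_apply, map_sub, map_zero, ← Th_nat, ← hμ, hg, hμy,
        sub_self]
    have hle : LinearMap.ker (κ.toLinearMap - j) ≤ LinearMap.range (ι : A →ₗ[k] H) := by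
      intro h hh
      rw [LinearMap.mem_ker, LinearMap.sub_apply, sub_eq_zero, hκ] at hh
      exact left_coinv_mem ι π hsurj hexactB hcssH h hh
    have h2 : g v ∈ LinearMap.ker (TensorProduct.AlgebraTensorModule.lTensor k W (κ.toLinearMap - j)) := hx
    rw [Module.Flat.ker_lTensor_eq (S := k)] at h2
    obtain ⟨y, hy⟩ := h2
    refine ⟨(Submodule.inclusion hle).lTensor W y, ?_⟩
    rw [← LinearMap.lTensor_comp_apply, ← hy]
    rfl

lemma slice_hom (ι : A →ₐc[k] H) (π : H →ₐc[k] B)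
    (hexactA : LinearMap.range (ι : A →ₗ[k] H) =
      quotientSpaceLeft k H (π : H →ₗ[k] B))
    (ρV : V →ₗ[k] V ⊗[k] H) 
    (ρW : W →ₗ[k] W ⊗[k] H) (g : V →ₗ[k] W ⊗[k] H)
    (hg : IsComodHom k H ρV
            (tensorCoact k H ρW (Coalgebra.comul (R := k) (A := H))) g)
    (hgA : ∀ v, g v ∈ LinearMap.range
            ((LinearMap.range (ι : A →ₗ[k] H)).subtype.lTensor W)) (ψ : H →ₗ[k] k) :
    IsComodHom k B (cores k H (π : H →ₗ[k] B) ρV)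
          (cores k H (π : H →ₗ[k] B) ρW) (sl ψ ∘ₗ g) := by
  rw [isComodHom_cores]
  rw [isComodHom_iff] at hg
  intro φ v
  simp only [LinearMap.comp_apply]
  rw [← hg]
  obtain ⟨y, hy⟩ := hgA v
  rw [← hy]
  clear hy
  induction y with
  | zero => simp
  | tmul w a =>
    obtain ⟨a, ha⟩ := a
    rw [hexactA, quotientSpaceLeft, LinearMap.mem_ker, LinearMap.sub_apply, sub_eq_zero] at ha
    simp only [LinearMap.lTensor_tmul, Submodule.subtype_apply, T_tensor_tmul]
    simp only [LinearMap.comp_apply, LinearMap.flip_apply, TensorProduct.mk_apply] at ha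
    have h1 : ∀ t : H ⊗[k] H, ∀ z : W ⊗[k] H,
        sl (φ ∘ₗ (π : H →ₗ[k] B)) ((LinearMap.mul' k H).lTensor (W ⊗[k] H)
        (TensorProduct.tensorTensorTensorComm k W H H H (z ⊗ₜ t))) =
        sl φ ((LinearMap.mul' k B).lTensor (W ⊗[k] H)
        (TensorProduct.tensorTensorTensorComm k W B H B ((π : H →ₗ[k] B).lTensor W z ⊗ₜ
          (π : H →ₗ[k] B).lTensor H t))) := by
      intro t z
      induction t with
      | zero => simp
      | tmul a b =>
        induction z with
        | zero => simp
        | tmul x y => simp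
        | add x y hx hy => simp only [map_add, add_tmul, hx, hy]
      | add x y hx hy => simp only [map_add, tmul_add, hx, hy]
    rw [h1, ha, sl_tmul, T_apply, map_smul]
    generalize ρW w = z
    induction z with
    | zero => simp
    | tmul x y => simp [smul_smul, mul_comm]
    | add x y hx hy => simp only [map_add, add_tmul, smul_add, hx, hy]
  | add x y hx hy => simp only [map_add, hx, hy]

end Th
end QG9
namespace QG9
open QG
section Fin
variable {k : Type u} [Field k]

lemma SimpleComodule.ne {C : Type u} [AddCommGroup C] [Module k C] [Coalgebra k C]
    (X : SimpleComodule k C) : ∃ v : X.V, v ≠ 0 := by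
  by_contra! h
  apply X.isSimple.2.1
  rw [eq_bot_iff]
  intro v _
  simpa using h v

/-- a nonzero comodule has a simple constituent with a colinear retraction -/
lemma exists_simple {C : Type u} [AddCommGroup C] [Module k C] [Coalgebra k C]
    (hC : IsCosemisimple k C) {V : Type u} [AddCommGroup V] [Module k V]
    (ρ : V →ₗ[k] V ⊗[k] C) (hρ : IsComod k C ρ) (hne : ∃ v : V, v ≠ 0) :
    ∃ (S : SimpleComodule k C) (i : S.V →ₗ[k] V) (r : V →ₗ[k] S.V),
      i ≠ 0 ∧ IsComodHom k C S.ρ ρ i ∧ IsComodHom k C ρ S.ρ r ∧ r ∘ₗ i = LinearMap.id := by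
  obtain ⟨I, U, hU, -, htop⟩ := hC V ρ hρ
  have hI : Nonempty I := by
    by_contra hI
    rw [not_nonempty_iff] at hI
    obtain ⟨v, hv⟩ := hne
    rw [iSup_of_empty] at htop
    have : v ∈ (⊥ : Submodule k V) := by rw [htop]; trivial
    exact hv (by simpa using this)
  obtain ⟨i⟩ := hI
  obtain ⟨hs, hne', hsimp⟩ := hU i
  generalize U i = X at *
  obtain ⟨ρX, hX, hincl⟩ := exists_restrict ρ hρ X hs
  obtain ⟨P, hP, hPr, hPi⟩ := exists_proj hC ρ hρ X hs
  have hincl' := (isComodHom_iff _ _ _).mp hincl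
  have h0 : X.subtype ≠ 0 := by
    intro h
    apply hne'
    rw [eq_bot_iff]
    intro x hx
    have := LinearMap.congr_fun h ⟨x, hx⟩
    simpa using this
  refine ⟨{ V := X, ρ := ρX, isComod := hX, isSimple := ⟨?_, ?_, ?_⟩ }, X.subtype,
    P.codRestrict X hPr, h0, hincl, ?_, ?_⟩
  · rw [isSubcomod_iff]; intros; trivial
  · intro h
    apply hne'
    rw [eq_bot_iff]
    intro x hx
    have : (⟨x, hx⟩ : X) ∈ (⊤ : Submodule k X) := trivial
    rw [h] at this
    simpa using this
  · intro U' _ hU'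
    rcases hsimp (U'.map X.subtype) (Submodule.map_subtype_le X U') (by
      rw [isSubcomod_iff] at hU' ⊢
      rintro φ _ ⟨u, hu, rfl⟩
      rw [hincl']
      exact ⟨_, hU' φ u hu, rfl⟩) with h | h
    · left
      rw [eq_bot_iff]
      intro x hx
      have h1 : X.subtype x ∈ U'.map X.subtype := ⟨x, hx, rfl⟩
      rw [h] at h1
      simpa using h1
    · right
      rw [eq_top_iff]
      intro x _
      have : (x : V) ∈ U'.map X.subtype := by rw [h]; exact x.2
      obtain ⟨y, hy, hxy⟩ := this
      rwa [← X.injective_subtype hxy]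
  · rw [isComodHom_iff]
    intro φ v
    apply X.injective_subtype
    rw [← hincl']
    exact hP φ v
  · ext x
    exact hPi x x.2

end Fin
end QG9

open QG in
/-- For an exact sequence `k → A → H → B → k` of cosemisimple
Hopf algebras, the relation `∼_H` (existence of a nonzero `B`-comodule map) is
an equivalence relation on simple `H`-comodules, and `V ∼_H W` iff `V` and `W`
have the same simple `B`-constituents, iff `V` embeds into `W ⊗ A` as an
`H`-comodule. -/
theorem statement_9 (k : Type u) [Field k] [IsAlgClosed k]
    (A H B : Type u) [Ring A] [HopfAlgebra k A] [Ring H] [HopfAlgebra k H]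
    [Ring B] [HopfAlgebra k B]
    (ι : A →ₐc[k] H) (π : H →ₐc[k] B)
    (hinj : Function.Injective ι) (hsurj : Function.Surjective π)
    (hexactA : LinearMap.range (ι : A →ₗ[k] H) =
      quotientSpaceLeft k H (π : H →ₗ[k] B))
    (hexactB : LinearMap.ker (π : H →ₗ[k] B) =
      leftIdealGen k (LinearMap.range (ι : A →ₗ[k] H) ⊓
        LinearMap.ker (Coalgebra.counit (R := k) (A := H))))
    (hcssA : IsCosemisimple k A) (hcssH : IsCosemisimple k H)
    (hcssB : IsCosemisimple k B) :
    Equivalence (fun X Y : SimpleComodule k H =>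
      ∃ f : X.V →ₗ[k] Y.V, f ≠ 0 ∧
        IsComodHom k B (cores k H (π : H →ₗ[k] B) X.ρ)
          (cores k H (π : H →ₗ[k] B) Y.ρ) f) ∧
    ∀ X Y : SimpleComodule k H,
      ((∃ f : X.V →ₗ[k] Y.V, f ≠ 0 ∧
        IsComodHom k B (cores k H (π : H →ₗ[k] B) X.ρ)
          (cores k H (π : H →ₗ[k] B) Y.ρ) f) ↔
        (∀ T : SimpleComodule k B,
          IsConstituent k B T.ρ (cores k H (π : H →ₗ[k] B) X.ρ) ↔
          IsConstituent k B T.ρ (cores k H (π : H →ₗ[k] B) Y.ρ))) ∧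
      ((∃ f : X.V →ₗ[k] Y.V, f ≠ 0 ∧
        IsComodHom k B (cores k H (π : H →ₗ[k] B) X.ρ)
          (cores k H (π : H →ₗ[k] B) Y.ρ) f) ↔
        (∃ g : X.V →ₗ[k] Y.V ⊗[k] H, Function.Injective g ∧
          IsComodHom k H X.ρ
            (tensorCoact k H Y.ρ (Coalgebra.comul (R := k) (A := H))) g ∧
          ∀ v : X.V, g v ∈ LinearMap.range
            ((LinearMap.range (ι : A →ₗ[k] H)).subtype.lTensor Y.V))) := by
  have key13 : ∀ X Y : SimpleComodule k H, (∃ f : X.V →ₗ[k] Y.V, f ≠ 0 ∧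
        IsComodHom k B (cores k H (π : H →ₗ[k] B) X.ρ)
          (cores k H (π : H →ₗ[k] B) Y.ρ) f) →
        (∃ g : X.V →ₗ[k] Y.V ⊗[k] H, Function.Injective g ∧
          IsComodHom k H X.ρ
            (tensorCoact k H Y.ρ (Coalgebra.comul (R := k) (A := H))) g ∧
          ∀ v : X.V, g v ∈ LinearMap.range
            ((LinearMap.range (ι : A →ₗ[k] H)).subtype.lTensor Y.V)) := by
    rintro X Y ⟨f, hf0, hf⟩
    exact QG9.exists_embed ι π hsurj hexactB hcssH X.ρ X.isComod X.isSimple Y.ρ Y.isComod f hf0 hf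
  have symm : ∀ X Y : SimpleComodule k H, (∃ f : X.V →ₗ[k] Y.V, f ≠ 0 ∧
        IsComodHom k B (cores k H (π : H →ₗ[k] B) X.ρ)
          (cores k H (π : H →ₗ[k] B) Y.ρ) f) → (∃ f : Y.V →ₗ[k] X.V, f ≠ 0 ∧
        IsComodHom k B (cores k H (π : H →ₗ[k] B) Y.ρ)
          (cores k H (π : H →ₗ[k] B) X.ρ) f) := by
    rintro X Y ⟨f, hf0, hf⟩
    exact QG9.exists_back hcssB _ (QG9.cores_isComod π X.ρ X.isComod) _
      (QG9.cores_isComod π Y.ρ Y.isComod) f hf0 hf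
  have comp : ∀ {V1 V2 V3 : Type u} [AddCommGroup V1] [Module k V1] [AddCommGroup V2]
      [Module k V2] [AddCommGroup V3] [Module k V3] (r1 : V1 →ₗ[k] V1 ⊗[k] B)
      (r2 : V2 →ₗ[k] V2 ⊗[k] B) (r3 : V3 →ₗ[k] V3 ⊗[k] B) (f : V1 →ₗ[k] V2) (g : V2 →ₗ[k] V3),
      IsComodHom k B r1 r2 f → IsComodHom k B r2 r3 g → IsComodHom k B r1 r3 (g ∘ₗ f) := by
    intro V1 V2 V3 _ _ _ _ _ _ r1 r2 r3 f g hf hg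
    rw [QG9.isComodHom_iff] at *
    intro φ v
    rw [LinearMap.comp_apply, LinearMap.comp_apply, hg, hf]
  have sub12 : ∀ X Y : SimpleComodule k H, (∃ f : X.V →ₗ[k] Y.V, f ≠ 0 ∧
        IsComodHom k B (cores k H (π : H →ₗ[k] B) X.ρ)
          (cores k H (π : H →ₗ[k] B) Y.ρ) f) → ∀ T : SimpleComodule k B,
          IsConstituent k B T.ρ (cores k H (π : H →ₗ[k] B) X.ρ) →
          IsConstituent k B T.ρ (cores k H (π : H →ₗ[k] B) Y.ρ) := by
    rintro X Y h T ⟨t, ht0, ht⟩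
    obtain ⟨g, hginj, hg, hgA⟩ := key13 X Y h
    have : ∃ ψ : H →ₗ[k] k, (QG9.sl ψ ∘ₗ g) ∘ₗ t ≠ 0 := by
      by_contra! hψ
      apply ht0
      ext x
      apply hginj
      rw [LinearMap.zero_apply, map_zero]
      apply QG9.eq_zero_of_sl
      intro ψ
      exact LinearMap.congr_fun (hψ ψ) x
    obtain ⟨ψ, hψ⟩ := this
    exact ⟨_, hψ, comp _ _ _ _ _ ht (QG9.slice_hom ι π hexactA X.ρ Y.ρ g hg hgA ψ)⟩
  have h12 : ∀ X Y : SimpleComodule k H, (∃ f : X.V →ₗ[k] Y.V, f ≠ 0 ∧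
        IsComodHom k B (cores k H (π : H →ₗ[k] B) X.ρ)
          (cores k H (π : H →ₗ[k] B) Y.ρ) f) ↔ ∀ T : SimpleComodule k B,
          IsConstituent k B T.ρ (cores k H (π : H →ₗ[k] B) X.ρ) ↔
          IsConstituent k B T.ρ (cores k H (π : H →ₗ[k] B) Y.ρ) := by
    intro X Y
    constructor
    · intro h T
      exact ⟨sub12 X Y h T, sub12 Y X (symm X Y h) T⟩
    · intro h
      obtain ⟨S, i, r, hi0, hi, hr, hri⟩ := QG9.exists_simple hcssB _
        (QG9.cores_isComod π X.ρ X.isComod) (QG9.SimpleComodule.ne X)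
      obtain ⟨f, hf0, hf⟩ := (h S).mp ⟨i, hi0, hi⟩
      refine ⟨f ∘ₗ r, fun h0 => hf0 ?_, comp _ _ _ _ _ hr hf⟩
      rw [← LinearMap.comp_id f, ← hri, ← LinearMap.comp_assoc, h0, LinearMap.zero_comp]
  refine ⟨⟨?_, ?_, ?_⟩, fun X Y => ⟨h12 X Y, key13 X Y, ?_⟩⟩
  · intro X
    exact (h12 X X).mpr fun T => Iff.rfl
  · intro X Y h
    exact symm X Y h
  · intro X Y Z h1 h2
    exact (h12 X Z).mpr fun T => ((h12 X Y).mp h1 T).trans ((h12 Y Z).mp h2 T)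
  · rintro ⟨g, hginj, hg, hgA⟩
    have : ∃ ψ : H →ₗ[k] k, QG9.sl ψ ∘ₗ g ≠ 0 := by
      by_contra! hψ
      obtain ⟨v, hv⟩ := QG9.SimpleComodule.ne X
      apply hv
      apply hginj
      rw [map_zero]
      apply QG9.eq_zero_of_sl
      intro ψ
      exact LinearMap.congr_fun (hψ ψ) v
    obtain ⟨ψ, hψ⟩ := this
    exact ⟨_, hψ, QG9.slice_hom ι π hexactA X.ρ Y.ρ g hg hgA ψ⟩
end
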